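/- Let K be a number field, fix an embedding of K into the complex numbers, and let f(z) = ∑_{n≥0} a_n z^n ∈ K[[z]] be a D-finite power series that is not a polynomial. If the radius of convergence r of the complex power series ∑ a_n z^n is 0 or ∞, then there are constants C₁, c > 0 such that h(a_n) ≤ C₁ · n·log n for all sufficiently large n, and the set {n ∈ ℕ : h(a_n) ≥ c · n·log n} has positive upper density. -/

import Mathlib

/-!
The coefficients of a D-finite series satisfy a linear recurrence `∑_{j ≤ s} P_j(n) a_{n+j} = 0`,
whose polynomials may be taken over `𝓞 K` with `P_s ≠ 0` (`exists_integral_recurrence`).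

*Upper bound* (`height_upper_bound`). Solving for `a_{n+s}`, a fixed `d ∈ 𝓞 K` times the product of
the values of `P_s` is a common denominator of the terms, and under every embedding of `K` a window
of `s` consecutive terms grows by a factor at most `n ^ E` in each step. Both contributions to the
height are therefore `O(n log n)`.

*Gaps in the growth.* The heart of the lower bound is that solutions of the recurrence over `ℂ`
cannot grow or decay at intermediate rates: growth at most `(n!) ^ (1 / (2 s))` implies at most
exponential growth (`gap_radius_zero`), and decay faster than every geometric sequence implies
decay like `(n!) ^ (-1 / (2 s))` (`gap_radius_top`). Instead of the Birkhoff–Trjitzinsky asymptotics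
or Newton polygons, an elementary maximum principle (`maximum_principle`) is used. One solves the
recurrence for the term whose polynomial has maximal degree, choosing the extreme such index on the
appropriate side. On one side of this pivot the coefficients are then bounded, which a weight
`B ^ n` absorbs; on the other side they are `O(1/n)`, which absorbs the variation `O(√n)` of
`(n!) ^ (1 / (2 s))` over a window. So `B ^ n` and `B ^ n (n!) ^ (1 / (2 s))` (respectively their
reciprocals) are both strict supersolutions, and a solution negligible against one of them is
bounded by a multiple of the other.

*Lower bound.* For infinite radius (`lower_bound_top`) every nonzero term satisfies
`|a_n| ≤ C (n!) ^ (-1 / (2 s))`, so its height is at least a multiple of `n log n` by the Liouville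
inequality (`neg_log_norm_le_weilHeight`); since `f` is not a polynomial, every window of length `s`
far out contains a nonzero term. For radius zero (`lower_bound_zero`) there are infinitely many `N`
with `|a_N| > (N!) ^ (1 / (2 s))`. By the bound on the growth of windows, each window of length `s`
in `[(1 - δ) N, N]`, with `δ` small, contains a term of size at least `exp (c' N log N)` for some
`c' > 0`. In both cases the indices of large height meet all windows of length `s` in intervals
`[(1 - δ) N, N]` with `N` arbitrarily large, so they have positive upper density
(`posUpperDensity_of_windows`).
-/

open Filter Polynomial PowerSeries

/-- The upper density of a set of natural numbers. -/
noncomputable def upperDensity (S : Set ℕ) : ℝ :=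
  Filter.limsup (fun n => ((S ∩ Set.Icc 1 n).ncard : ℝ) / n) Filter.atTop

/-- `S ⊆ ℕ` has positive upper density. -/
def HasPosUpperDensity (S : Set ℕ) : Prop := 0 < upperDensity S

/-- `S ⊆ ℕ` has zero density. -/
def HasZeroDensity (S : Set ℕ) : Prop := upperDensity S = 0
open NumberField in
/-- The denominator ideal of `α ∈ K`: the ideal of `x ∈ 𝓞 K` with `x • α` integral. -/
noncomputable def denIdeal (K : Type*) [Field K] [NumberField K] (α : K) : Ideal (𝓞 K) :=
  (1 : Submodule (𝓞 K) K).colon (Submodule.span (𝓞 K) {α})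

open NumberField in
/-- The absolute logarithmic Weil height of `α ∈ K`:
`h(α) = (log N(𝔡_α) + ∑_{σ : K →+* ℂ} log⁺ |σ α|) / [K:ℚ]`, which agrees with
`∑_{w ∈ M_K} log max(|α|_w, 1)` for the standard normalized absolute values. -/
noncomputable def weilHeight (K : Type*) [Field K] [NumberField K] (α : K) : ℝ :=
  (Real.log (Ideal.absNorm (denIdeal K α)) +
    ∑ σ : K →+* ℂ, Real.log (max 1 ‖σ α‖)) / (Module.finrank ℚ K)
/-- The formal derivative of a power series. -/
noncomputable def psDeriv {k : Type*} [Field k] : PowerSeries k → PowerSeries k :=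
  PowerSeries.derivativeFun

/-- A power series is D-finite if it satisfies a nontrivial linear homogeneous
differential equation `A₀ f⁽ᵖ⁾ + A₁ f⁽ᵖ⁻¹⁾ + ⋯ + A_p f = 0` with polynomial
coefficients and `A₀ ≠ 0`. -/
def IsDFinite {k : Type*} [Field k] (f : PowerSeries k) : Prop :=
  ∃ (p : ℕ) (A : Fin (p + 1) → Polynomial k), A 0 ≠ 0 ∧
    ∑ i : Fin (p + 1), (A i : PowerSeries k) * (psDeriv^[p - i.val] f) = 0
/-- The radius of convergence of the complex power series `∑ a_n z^n`. -/
noncomputable def seriesRadius (a : ℕ → ℂ) : ENNReal :=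
  ⨆ (r : NNReal) (_ : ∃ C : ℝ, ∀ n, ‖a n‖ * (r : ℝ) ^ n ≤ C), (r : ENNReal)

open scoped Topology

/-! ### Ratios of polynomials, the maximum principle and supersolutions -/

/-- The quotient of `p(n)` by `n ^ D` tends to the coefficient of degree `D`. -/
lemma poly_tendsto (p : ℂ[X]) (D : ℕ) (h : p.natDegree ≤ D) :
    Tendsto (fun n : ℕ => p.eval (n : ℂ) / (n : ℂ) ^ D) atTop (𝓝 (p.coeff D)) := by
  have h1 : ∀ i ∈ Finset.range (D + 1), Tendsto
      (fun n : ℕ => p.coeff i * ((n : ℂ) ^ i / (n : ℂ) ^ D)) atTop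
      (𝓝 (if i = D then p.coeff D else 0)) := by
    intro i hi
    have hiD : i ≤ D := by simpa [Nat.lt_succ_iff] using hi
    rcases hiD.eq_or_lt with rfl | hlt
    · rw [if_pos rfl]
      refine tendsto_const_nhds.congr' ?_
      filter_upwards [eventually_gt_atTop 0] with n hn
      have : (n : ℂ) ≠ 0 := by exact_mod_cast hn.ne'
      field_simp
    · rw [if_neg hlt.ne]
      have h2 : Tendsto (fun n : ℕ => p.coeff i * ((n : ℂ)⁻¹) ^ (D - i)) atTop
          (𝓝 (p.coeff i * 0 ^ (D - i))) :=
        ((tendsto_inv_atTop_nhds_zero_nat (𝕜 := ℂ)).pow _).const_mul _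
      rw [zero_pow (by omega), mul_zero] at h2
      refine h2.congr' ?_
      filter_upwards [eventually_gt_atTop 0] with n hn
      have hn0 : (n : ℂ) ≠ 0 := by exact_mod_cast hn.ne'
      congr 1
      rw [inv_pow, eq_div_iff (by positivity), inv_mul_eq_iff_eq_mul₀ (by positivity), ← pow_add]
      congr 1; omega
  have h3 := tendsto_finsetSum _ h1
  rw [Finset.sum_ite_eq' _ D, if_pos (by simp)] at h3
  refine h3.congr fun n => ?_
  rw [Polynomial.eval_eq_sum_range' (Nat.lt_succ_of_le h), Finset.sum_div]
  exact Finset.sum_congr rfl fun i _ => by ring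

lemma poly_ratio_bound (p q : ℂ[X]) (D : ℕ) (hp : p.natDegree ≤ D) (hq : q.natDegree ≤ D)
    (hq0 : q.coeff D ≠ 0) :
    ∃ A : ℝ, ∀ᶠ n : ℕ in atTop, q.eval (n : ℂ) ≠ 0 ∧
      ‖p.eval (n : ℂ)‖ / ‖q.eval (n : ℂ)‖ ≤ A := by
  have h1 := ((poly_tendsto p D hp).div (poly_tendsto q D hq) hq0).norm
  have h2 := (poly_tendsto q D hq).eventually_ne hq0
  refine ⟨‖p.coeff D / q.coeff D‖ + 1, ?_⟩
  filter_upwards [h1.eventually_le_const (lt_add_one _), h2, eventually_gt_atTop 0] with n h3 h4 hn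
  have hn0 : (n : ℂ) ^ D ≠ 0 := pow_ne_zero _ (by exact_mod_cast hn.ne')
  refine ⟨fun h => h4 (by simp [h]), ?_⟩
  simpa [div_div_div_cancel_right₀ hn0] using h3

/-- The maximal degree `D` of `P 0, …, P s` is attained by a polynomial with nonzero coefficient
of degree `D` (so `D` is honest even though the zero polynomial has `natDegree` zero). -/
lemma exists_top_degree (s : ℕ) (P : ℕ → ℂ[X]) (hP : P s ≠ 0) :
    ∃ D, (∀ j ≤ s, (P j).natDegree ≤ D) ∧ ∃ j ≤ s, (P j).coeff D ≠ 0 := by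
  obtain ⟨j, hj, hmax⟩ := Finset.exists_max_image (Finset.range (s + 1))
    (fun j => (P j).natDegree) ⟨s, by simp⟩
  have hmax' : ∀ i ≤ s, (P i).natDegree ≤ (P j).natDegree :=
    fun i hi => hmax i (by simp; omega)
  refine ⟨(P j).natDegree, hmax', ?_⟩
  by_cases h0 : P j = 0
  · refine ⟨s, le_rfl, ?_⟩
    have := hmax' s le_rfl
    rw [h0, Polynomial.natDegree_zero] at this ⊢
    rw [← Nat.le_zero.1 this]
    exact Polynomial.leadingCoeff_ne_zero.2 hP
  · exact ⟨j, by simpa [Nat.lt_succ_iff] using hj, Polynomial.leadingCoeff_ne_zero.2 h0⟩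

/-- Let `D` be the maximal degree and let the pivot `k` have degree exactly `D`. Then the ratios
`P j (n) / P k (n)` are bounded, and they are `O(1/n)` whenever `P j` has degree less than `D`. -/
lemma ratio_bounds (s : ℕ) (P : ℕ → ℂ[X]) (D k : ℕ)
    (hD : ∀ j ≤ s, (P j).natDegree ≤ D) (hk : k ≤ s) (hk0 : (P k).coeff D ≠ 0) :
    ∃ A : ℝ, 1 ≤ A ∧ ∀ᶠ n : ℕ in atTop, (P k).eval (n : ℂ) ≠ 0 ∧
      ∀ j ≤ s, ‖(P j).eval (n : ℂ)‖ / ‖(P k).eval (n : ℂ)‖ ≤ A ∧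
        ((P j).coeff D = 0 → ‖(P j).eval (n : ℂ)‖ / ‖(P k).eval (n : ℂ)‖ * n ≤ A) := by
  have h1 : ∀ j : ℕ, ∃ A : ℝ, j ≤ s → ∀ᶠ n : ℕ in atTop, (P k).eval (n : ℂ) ≠ 0 ∧
      ‖(P j).eval (n : ℂ)‖ / ‖(P k).eval (n : ℂ)‖ ≤ A := by
    intro j
    by_cases hj : j ≤ s
    · obtain ⟨A, hA⟩ := poly_ratio_bound (P j) (P k) D (hD j hj) (hD k hk) hk0
      exact ⟨A, fun _ => hA⟩
    · exact ⟨0, fun h => absurd h hj⟩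
  have h2 : ∀ j : ℕ, ∃ A : ℝ, j ≤ s → (P j).coeff D = 0 → ∀ᶠ n : ℕ in atTop,
      ‖(P j).eval (n : ℂ)‖ / ‖(P k).eval (n : ℂ)‖ * n ≤ A := by
    intro j
    by_cases hj : j ≤ s ∧ (P j).coeff D = 0
    · have hdeg : (P j * Polynomial.X).natDegree ≤ D := by
        rw [Polynomial.natDegree_le_iff_coeff_eq_zero]
        intro N hN
        obtain ⟨M, rfl⟩ : ∃ M, N = M + 1 := ⟨N - 1, by omega⟩
        rw [Polynomial.coeff_mul_X]
        rcases (Nat.lt_succ_iff.1 hN).eq_or_lt with h | h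
        · rw [← h]; exact hj.2
        · exact Polynomial.coeff_eq_zero_of_natDegree_lt ((hD j hj.1).trans_lt h)
      obtain ⟨A, hA⟩ := poly_ratio_bound (P j * Polynomial.X) (P k) D hdeg (hD k hk) hk0
      refine ⟨A, fun _ _ => ?_⟩
      filter_upwards [hA] with n hn
      refine le_trans (le_of_eq ?_) hn.2
      simp; ring
    · exact ⟨0, fun h h' => absurd ⟨h, h'⟩ hj⟩
  choose A1 hA1 using h1
  choose A2 hA2 using h2
  refine ⟨1 + ∑ j ∈ Finset.range (s + 1), (|A1 j| + |A2 j|), ?_, ?_⟩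
  · have : 0 ≤ ∑ j ∈ Finset.range (s + 1), (|A1 j| + |A2 j|) :=
      Finset.sum_nonneg fun _ _ => by positivity
    linarith
  have hle : ∀ j ≤ s, |A1 j| + |A2 j| ≤ ∑ j ∈ Finset.range (s + 1), (|A1 j| + |A2 j|) :=
    fun j hj => Finset.single_le_sum (f := fun j => |A1 j| + |A2 j|)
      (fun _ _ => by positivity) (by simp; omega)
  have e1 : ∀ᶠ n : ℕ in atTop, ∀ j ∈ Finset.range (s + 1), (P k).eval (n : ℂ) ≠ 0 ∧
      ‖(P j).eval (n : ℂ)‖ / ‖(P k).eval (n : ℂ)‖ ≤ A1 j :=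
    (Filter.eventually_all_finset _).2 fun j hj => hA1 j (by simpa [Nat.lt_succ_iff] using hj)
  have e2 : ∀ᶠ n : ℕ in atTop, ∀ j ∈ Finset.range (s + 1), (P j).coeff D = 0 →
      ‖(P j).eval (n : ℂ)‖ / ‖(P k).eval (n : ℂ)‖ * n ≤ A2 j :=
    (Filter.eventually_all_finset _).2 fun j hj => by
      by_cases h0 : (P j).coeff D = 0
      · filter_upwards [hA2 j (by simpa [Nat.lt_succ_iff] using hj) h0] with n hn _ using hn
      · exact Eventually.of_forall fun n h => absurd h h0
  filter_upwards [e1, e2] with n h1 h2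
  refine ⟨(h1 s (by simp)).1, fun j hj => ?_⟩
  have hj' : j ∈ Finset.range (s + 1) := by simp; omega
  have := hle j hj
  have p1 := le_abs_self (A1 j)
  have p2 := le_abs_self (A2 j)
  have p3 := abs_nonneg (A1 j)
  have p4 := abs_nonneg (A2 j)
  exact ⟨by linarith [(h1 j hj').2], fun h0 => by linarith [h2 j hj' h0]⟩

/-- Maximum principle. Let `u` be a subsolution, and `φ`, `ψ` positive supersolutions with a factor
`1/2` to spare, of the inequality that bounds the term at `n + k` by the other terms of the window
starting at `n`. If `u = o(ψ)`, then `u = O(φ)`.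

For every `δ > 0` the ratio `u / (C φ + δ ψ)` is less than one far out, and at most one for the
first `n₁ + k` indices by the choice of `C`. A value exceeding one would force an interior maximum,
which the inequality at that point excludes. Then `δ` tends to zero. -/
lemma maximum_principle (u φ ψ : ℕ → ℝ) (s k n₁ : ℕ) (c : ℕ → ℕ → ℝ)
    (hu : ∀ n, 0 ≤ u n) (hφ : ∀ n, 0 < φ n) (hψ : ∀ n, 0 < ψ n) (hc : ∀ j n, 0 ≤ c j n)
    (hrec : ∀ n ≥ n₁, u (n + k) ≤ ∑ j ∈ (Finset.range (s + 1)).erase k, c j n * u (n + j))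
    (hsφ : ∀ n ≥ n₁, ∑ j ∈ (Finset.range (s + 1)).erase k, c j n * φ (n + j) ≤ φ (n + k) / 2)
    (hsψ : ∀ n ≥ n₁, ∑ j ∈ (Finset.range (s + 1)).erase k, c j n * ψ (n + j) ≤ ψ (n + k) / 2)
    (ho : Tendsto (fun n => u n / ψ n) atTop (𝓝 0)) :
    ∃ C : ℝ, 0 < C ∧ ∀ n, u n ≤ C * φ n := by
  set C : ℝ := 1 + ∑ m ∈ Finset.range (n₁ + k), u m / φ m with hC
  have hsum : 0 ≤ ∑ m ∈ Finset.range (n₁ + k), u m / φ m :=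
    Finset.sum_nonneg fun m _ => div_nonneg (hu m) (hφ m).le
  have hC0 : 0 < C := by linarith
  have hstart : ∀ m < n₁ + k, u m ≤ C * φ m := by
    intro m hm
    have : u m / φ m ≤ ∑ m ∈ Finset.range (n₁ + k), u m / φ m :=
      Finset.single_le_sum (f := fun m => u m / φ m)
        (fun m _ => div_nonneg (hu m) (hφ m).le) (by simpa using hm)
    rw [← div_le_iff₀ (hφ m)]
    linarith
  have key : ∀ δ : ℝ, 0 < δ → ∀ n, u n ≤ C * φ n + δ * ψ n := by
    intro δ hδ
    by_contra! hcon
    obtain ⟨m, hm⟩ := hcon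
    set w : ℕ → ℝ := fun n => C * φ n + δ * ψ n with hw
    have hwpos : ∀ n, 0 < w n := fun n => by
      have := hφ n; have := hψ n; positivity
    obtain ⟨N, hN⟩ := eventually_atTop.1 (ho.eventually_lt_const hδ)
    have hN' : ∀ n ≥ N, u n < w n := fun n hn => by
      have h1 := (div_lt_iff₀ (hψ n)).1 (hN n hn)
      have := mul_pos hC0 (hφ n)
      simp only [hw]; linarith
    have hmN : m < N := by
      by_contra! h
      exact absurd (hN' m h) (not_lt.2 hm.le)
    obtain ⟨x, _, hxmax⟩ := Finset.exists_max_image (Finset.range N) (fun n => u n / w n)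
      ⟨m, by simpa using hmN⟩
    have hT1 : 1 < u x / w x :=
      lt_of_lt_of_le ((one_lt_div (hwpos m)).2 hm) (hxmax m (by simpa using hmN))
    have hall : ∀ n, u n ≤ u x / w x * w n := by
      intro n
      rw [← div_le_iff₀ (hwpos n)]
      by_cases hn : n < N
      · exact hxmax n (by simpa using hn)
      · exact ((div_lt_one (hwpos n)).2 (hN' n (by omega))).le.trans hT1.le
    have hxk : n₁ + k ≤ x := by
      by_contra! h
      have h1 := hstart x h
      have h2 : w x < u x := (one_lt_div (hwpos x)).1 hT1
      have := mul_pos hδ (hψ x)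
      simp only [hw] at h2
      linarith
    obtain ⟨n, rfl⟩ : ∃ n, x = n + k := ⟨x - k, by omega⟩
    have hn : n ≥ n₁ := by omega
    set T := u (n + k) / w (n + k) with hT
    have hTw : u (n + k) = T * w (n + k) := by
      rw [hT, div_mul_cancel₀ _ (hwpos _).ne']
    have h1 : u (n + k) ≤ T * (w (n + k) / 2) := by
      calc u (n + k) ≤ ∑ j ∈ (Finset.range (s + 1)).erase k, c j n * u (n + j) := hrec n hn
        _ ≤ ∑ j ∈ (Finset.range (s + 1)).erase k, c j n * (T * w (n + j)) :=
            Finset.sum_le_sum fun j _ => mul_le_mul_of_nonneg_left (hall _) (hc _ _)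
        _ = T * (C * ∑ j ∈ (Finset.range (s + 1)).erase k, c j n * φ (n + j) +
              δ * ∑ j ∈ (Finset.range (s + 1)).erase k, c j n * ψ (n + j)) := by
            simp only [hw, Finset.mul_sum, ← Finset.sum_add_distrib]
            exact Finset.sum_congr rfl fun j _ => by ring
        _ ≤ T * (C * (φ (n + k) / 2) + δ * (ψ (n + k) / 2)) := by
            have := hsφ n hn
            have := hsψ n hn
            have hT0 : 0 ≤ T := by linarith
            gcongr
        _ = T * (w (n + k) / 2) := by simp only [hw]; ring
    have := mul_pos (zero_lt_one.trans hT1) (hwpos (n + k))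
    linarith
  refine ⟨C, hC0, fun n => le_of_forall_pos_le_add fun e he => ?_⟩
  have := key (e / ψ n) (div_pos he (hψ n)) n
  rwa [div_mul_cancel₀ _ (hψ n).ne'] at this

/-- A criterion for `φ` to be a supersolution at the pivot `k`. For the `good` indices the coefficient
is bounded and `φ` gains a large factor `B`; for the other indices the coefficient is `O(1/n)`,
which beats a growth of `φ` by `O(√n)`. -/
lemma supersolution (s k : ℕ) (A B : ℝ) (hA : 1 ≤ A) (hB : B = 2 * (s + 1) * A)
    (c : ℕ → ℕ → ℝ) (good : ℕ → Prop) (φ : ℕ → ℝ) (hφ : ∀ n, 0 < φ n)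
    (hcA : ∀ᶠ n : ℕ in atTop, ∀ j ≤ s, j ≠ k → c j n ≤ A ∧ (¬ good j → c j n * n ≤ A))
    (hgood : ∀ n, ∀ j ≤ s, j ≠ k → good j → B * φ (n + j) ≤ φ (n + k))
    (hbad : ∀ n, ∀ j ≤ s, j ≠ k → ¬ good j → φ (n + j) ≤ φ (n + k) * (B ^ s * √(n + s))) :
    ∀ᶠ n : ℕ in atTop,
      ∑ j ∈ (Finset.range (s + 1)).erase k, c j n * φ (n + j) ≤ φ (n + k) / 2 := by
  have hs : (0 : ℝ) < s + 1 := by positivity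
  have hB0 : 0 < B := by rw [hB]; positivity
  have ht : Tendsto (fun n : ℕ => A * (B ^ s * √(n + s)) / (n : ℝ)) atTop (𝓝 0) := by
    have h1 : Tendsto (fun n : ℕ => (n + s : ℝ) / (n : ℝ) * (1 / (n : ℝ))) atTop (𝓝 (1 * 0)) := by
      refine Tendsto.mul ?_ tendsto_one_div_atTop_nhds_zero_nat
      have h2 : Tendsto (fun n : ℕ => 1 + (s : ℝ) / (n : ℝ)) atTop (𝓝 (1 + 0)) :=
        (tendsto_const_div_atTop_nhds_zero_nat (s : ℝ)).const_add 1
      rw [add_zero] at h2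
      refine h2.congr' ?_
      filter_upwards [eventually_gt_atTop 0] with n hn
      have : (n : ℝ) ≠ 0 := by exact_mod_cast hn.ne'
      field_simp
    have h3 := (h1.sqrt).const_mul (A * B ^ s)
    simp only [mul_zero, Real.sqrt_zero] at h3
    refine h3.congr' ?_
    filter_upwards [eventually_gt_atTop 0] with n hn
    have hn' : (0 : ℝ) < n := by exact_mod_cast hn
    rw [show (n + s : ℝ) / n * (1 / n) = (n + s) / n ^ 2 by field_simp,
      Real.sqrt_div (by positivity), Real.sqrt_sq hn'.le]
    ring
  have hlt : (0 : ℝ) < 1 / (2 * (s + 1)) := by positivity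
  filter_upwards [hcA, ht.eventually_le_const hlt, eventually_gt_atTop 0] with n hn hsmall hn0
  have hn' : (0 : ℝ) < n := by exact_mod_cast hn0
  have hterm : ∀ j ∈ (Finset.range (s + 1)).erase k,
      c j n * φ (n + j) ≤ φ (n + k) * (1 / (2 * (s + 1))) := by
    intro j hj
    have hjk : j ≠ k := Finset.ne_of_mem_erase hj
    have hjs : j ≤ s := by simpa [Nat.lt_succ_iff] using Finset.mem_of_mem_erase hj
    by_cases hg : good j
    · have h1 := hgood n j hjs hjk hg
      have h2 := (hn j hjs hjk).1
      calc c j n * φ (n + j) ≤ A * φ (n + j) := by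
            have := hφ (n + j); gcongr
        _ = (B * φ (n + j)) * (1 / (2 * (s + 1))) := by rw [hB]; field_simp
        _ ≤ _ := by gcongr
    · have h1 := hbad n j hjs hjk hg
      have h2 := (hn j hjs hjk).2 hg
      have h3 : c j n ≤ A / n := by rwa [le_div_iff₀ hn']
      calc c j n * φ (n + j) ≤ (A / n) * (φ (n + k) * (B ^ s * √(n + s))) := by
            have := hφ (n + j); have := hφ (n + k)
            gcongr
        _ = φ (n + k) * (A * (B ^ s * √(n + s)) / n) := by ring
        _ ≤ _ := by have := hφ (n + k); gcongr
  calc _ ≤ ∑ j ∈ (Finset.range (s + 1)).erase k, φ (n + k) * (1 / (2 * (s + 1))) :=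
        Finset.sum_le_sum hterm
    _ ≤ ∑ j ∈ Finset.range (s + 1), φ (n + k) * (1 / (2 * (s + 1))) :=
        Finset.sum_le_sum_of_subset_of_nonneg (Finset.erase_subset _ _)
          fun _ _ _ => by have := hφ (n + k); positivity
    _ = φ (n + k) / 2 := by
        rw [Finset.sum_const, Finset.card_range, nsmul_eq_mul]; push_cast; field_simp

/-! ### Gaps in the growth of solutions of a recurrence -/

/-- The weight `(n!) ^ (1 / (2 s))`; for `s = 0` the exponent is the junk value `0`. -/
noncomputable def facWeight (s n : ℕ) : ℝ := (n.factorial : ℝ) ^ (1 / (2 * s : ℝ))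

lemma facWeight_pos (s n : ℕ) : 0 < facWeight s n :=
  Real.rpow_pos_of_pos (by exact_mod_cast n.factorial_pos) _

lemma facWeight_mono (s : ℕ) {m n : ℕ} (h : m ≤ n) : facWeight s m ≤ facWeight s n :=
  Real.rpow_le_rpow (by positivity) (by exact_mod_cast Nat.factorial_le h) (by positivity)

/-- Over a window of length `s` the factorial grows by at most `(n + s) ^ s`, so `facWeight`, being
its root of order `2 s`, grows by at most `√(n + s)`. -/
lemma facWeight_add_le (s : ℕ) (hs : 1 ≤ s) (n i j : ℕ) (hij : i ≤ j) (hj : j ≤ s) :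
    facWeight s (n + j) ≤ facWeight s (n + i) * √(n + s) := by
  have h1 : ((n + j).factorial : ℝ) ≤ (n + i).factorial * (n + s : ℝ) ^ s := by
    have h2 : (n + j).factorial ≤ (n + i).factorial * (n + s) ^ s := by
      have h3 : ∀ t, i + t ≤ s → (n + (i + t)).factorial ≤ (n + i).factorial * (n + s) ^ t := by
        intro t
        induction t with
        | zero => intro _; simp
        | succ t ih =>
          intro ht
          rw [show n + (i + (t + 1)) = n + (i + t) + 1 by ring, Nat.factorial_succ, pow_succ]
          calc (n + (i + t) + 1) * (n + (i + t)).factorial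
              ≤ (n + s) * ((n + i).factorial * (n + s) ^ t) :=
                Nat.mul_le_mul (by omega) (ih (by omega))
            _ = _ := by ring
      obtain ⟨t, rfl⟩ := Nat.exists_eq_add_of_le hij
      exact (h3 t hj).trans (Nat.mul_le_mul_left _ (Nat.pow_le_pow_right (by omega) (by omega)))
    exact_mod_cast h2
  have hs' : (s : ℝ) ≠ 0 := by exact_mod_cast (by omega : s ≠ 0)
  calc facWeight s (n + j) ≤ ((n + i).factorial * (n + s : ℝ) ^ s) ^ (1 / (2 * s : ℝ)) :=
        Real.rpow_le_rpow (by positivity) h1 (by positivity)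
    _ = _ := by
        rw [Real.mul_rpow (by positivity) (by positivity), ← Real.rpow_natCast,
          ← Real.rpow_mul (by positivity), Real.sqrt_eq_rpow, facWeight]
        congr 2
        field_simp

/-- Two-sided control on the variation of a weight over a window of length `s`. -/
lemma weight_bounds (s : ℕ) (B : ℝ) (hB : 1 ≤ B) (F : ℕ → ℝ) (hF : ∀ n, 0 < F n)
    (hmono : ∀ m n, m ≤ n → F m ≤ F n)
    (hadd : ∀ n i j, i ≤ j → j ≤ s → F (n + j) ≤ F (n + i) * √(n + s))
    (n i j : ℕ) (hij : i < j) (hj : j ≤ s) :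
    B * (B ^ (n + i) * F (n + i)) ≤ B ^ (n + j) * F (n + j) ∧
    B ^ (n + j) * F (n + j) ≤ B ^ (n + i) * F (n + i) * (B ^ s * √(n + s)) := by
  have hB0 : 0 < B := by linarith
  constructor
  · calc B * (B ^ (n + i) * F (n + i)) = B ^ (n + i + 1) * F (n + i) := by ring
      _ ≤ B ^ (n + j) * F (n + j) := by
        have := hF (n + i)
        have := hmono (n + i) (n + j) (by omega)
        have : B ^ (n + i + 1) ≤ B ^ (n + j) := pow_le_pow_right₀ hB (by omega)
        gcongr
  · calc B ^ (n + j) * F (n + j) ≤ B ^ (n + i + s) * (F (n + i) * √(n + s)) := by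
          have h1 := hadd n i j hij.le hj
          have h2 : B ^ (n + j) ≤ B ^ (n + i + s) := pow_le_pow_right₀ hB (by omega)
          have := hF (n + j)
          gcongr
      _ = _ := by ring

/-- The recurrence solved for the term of index `n + k`. -/
lemma recurrence_solve (s : ℕ) (P : ℕ → ℂ[X]) (v : ℕ → ℂ) (k n : ℕ) (hk : k ≤ s)
    (hrec : ∑ j ∈ Finset.range (s + 1), (P j).eval (n : ℂ) * v (n + j) = 0)
    (h0 : (P k).eval (n : ℂ) ≠ 0) :
    ‖v (n + k)‖ ≤ ∑ j ∈ (Finset.range (s + 1)).erase k,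
      ‖(P j).eval (n : ℂ)‖ / ‖(P k).eval (n : ℂ)‖ * ‖v (n + j)‖ := by
  have hk' : k ∈ Finset.range (s + 1) := by simp; omega
  rw [← Finset.add_sum_erase _ _ hk'] at hrec
  have h1 : ‖(P k).eval (n : ℂ)‖ * ‖v (n + k)‖ ≤ ∑ j ∈ (Finset.range (s + 1)).erase k,
      ‖(P j).eval (n : ℂ)‖ * ‖v (n + j)‖ := by
    rw [← norm_mul, eq_neg_of_add_eq_zero_left hrec, norm_neg]
    exact (norm_sum_le _ _).trans (Finset.sum_le_sum fun j _ => (norm_mul _ _).le)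
  have h2 : 0 < ‖(P k).eval (n : ℂ)‖ := norm_pos_iff.2 h0
  rw [← mul_le_mul_iff_right₀ h2, Finset.mul_sum]
  refine h1.trans (Finset.sum_le_sum fun j _ => le_of_eq ?_)
  field_simp

/-- The maximum principle for a solution of the recurrence with pivot `k`: if the solution is `o(ψ)`
then it is `O(φ)`, provided both weights satisfy the growth conditions of `supersolution`. -/
lemma core_comparison (s : ℕ) (P : ℕ → ℂ[X]) (v : ℕ → ℂ) (k : ℕ) (hk : k ≤ s)
    (hrec : ∀ n : ℕ, ∑ j ∈ Finset.range (s + 1), (P j).eval (n : ℂ) * v (n + j) = 0)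
    (A B : ℝ) (hA1 : 1 ≤ A) (hB : B = 2 * (s + 1) * A) (good : ℕ → Prop)
    (hA : ∀ᶠ n : ℕ in atTop, (P k).eval (n : ℂ) ≠ 0 ∧
      ∀ j ≤ s, j ≠ k → ‖(P j).eval (n : ℂ)‖ / ‖(P k).eval (n : ℂ)‖ ≤ A ∧
        (¬ good j → ‖(P j).eval (n : ℂ)‖ / ‖(P k).eval (n : ℂ)‖ * n ≤ A))
    (φ ψ : ℕ → ℝ) (hφ : ∀ n, 0 < φ n) (hψ : ∀ n, 0 < ψ n)
    (hφg : ∀ n, ∀ j ≤ s, j ≠ k → good j → B * φ (n + j) ≤ φ (n + k))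
    (hφb : ∀ n, ∀ j ≤ s, j ≠ k → ¬ good j → φ (n + j) ≤ φ (n + k) * (B ^ s * √(n + s)))
    (hψg : ∀ n, ∀ j ≤ s, j ≠ k → good j → B * ψ (n + j) ≤ ψ (n + k))
    (hψb : ∀ n, ∀ j ≤ s, j ≠ k → ¬ good j → ψ (n + j) ≤ ψ (n + k) * (B ^ s * √(n + s)))
    (ho : Tendsto (fun n => ‖v n‖ / ψ n) atTop (𝓝 0)) :
    ∃ C : ℝ, 0 < C ∧ ∀ n, ‖v n‖ ≤ C * φ n := by
  set c : ℕ → ℕ → ℝ := fun j n => ‖(P j).eval (n : ℂ)‖ / ‖(P k).eval (n : ℂ)‖ with hc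
  have hA' := hA.mono fun n hn => hn.2
  have h1 := supersolution s k A B hA1 hB c good φ hφ hA' hφg hφb
  have h2 := supersolution s k A B hA1 hB c good ψ hψ hA' hψg hψb
  obtain ⟨n₁, hn₁⟩ := eventually_atTop.1 ((h1.and h2).and hA)
  exact maximum_principle (fun n => ‖v n‖) φ ψ s k n₁ c (fun _ => norm_nonneg _) hφ hψ
    (fun j n => by positivity)
    (fun n hn => recurrence_solve s P v k n hk (hrec n) (hn₁ n hn).2.1)
    (fun n hn => (hn₁ n hn).1.1) (fun n hn => (hn₁ n hn).1.2) ho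

/-- A gap in the possible growth, upper side: a solution bounded by `(n!) ^ (1 / (2 s))` grows at most
exponentially. The pivot is the largest index whose polynomial has maximal degree, so that all later
terms of the window enter with a coefficient `O(1/n)`; the comparison weights are `B ^ n` and
`B ^ n (n!) ^ (1 / (2 s))`. -/
theorem gap_radius_zero (s : ℕ) (hs : 1 ≤ s) (P : ℕ → ℂ[X]) (hP : P s ≠ 0) (v : ℕ → ℂ)
    (hrec : ∀ n : ℕ, ∑ j ∈ Finset.range (s + 1), (P j).eval (n : ℂ) * v (n + j) = 0)
    (hv : ∀ᶠ n in atTop, ‖v n‖ ≤ facWeight s n) :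
    ∃ B C : ℝ, 0 < B ∧ ∀ n, ‖v n‖ ≤ C * B ^ n := by
  obtain ⟨D, hD, hex⟩ := exists_top_degree s P hP
  classical
  obtain ⟨k, hkT, hkmax⟩ := Finset.exists_max_image
    ((Finset.range (s + 1)).filter fun j => (P j).coeff D ≠ 0) id
    (by obtain ⟨j, hj, h⟩ := hex; exact ⟨j, by simp [h]; omega⟩)
  simp only [Finset.mem_filter, Finset.mem_range, Nat.lt_succ_iff, id] at hkT hkmax
  obtain ⟨A, hA1, hA⟩ := ratio_bounds s P D k hD hkT.1 hkT.2
  set B : ℝ := 2 * (s + 1) * A with hB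
  have hB2 : 2 ≤ B := by
    have : (0 : ℝ) ≤ s := by positivity
    rw [hB]; nlinarith
  have w1 := weight_bounds s B (by linarith) (fun _ => 1) (fun _ => one_pos)
    (fun _ _ _ => le_rfl) (fun n i j _ _ => by
      rw [one_mul]; exact Real.one_le_sqrt.2 (by exact_mod_cast (by omega : 1 ≤ n + s)))
  have w2 := weight_bounds s B (by linarith) (facWeight s) (facWeight_pos s)
    (fun m n h => facWeight_mono s h) (fun n i j => facWeight_add_le s hs n i j)
  obtain ⟨C, hC, h⟩ := core_comparison s P v k hkT.1 hrec A B hA1 hB (fun j => j < k)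
    (hA.mono fun n hn => ⟨hn.1, fun j hj hjk => ⟨(hn.2 j hj).1, fun hlt => (hn.2 j hj).2 (by
      by_contra h0
      have := hkmax j ⟨hj, h0⟩
      omega)⟩⟩)
    (fun n => B ^ n * 1) (fun n => B ^ n * facWeight s n)
    (fun n => by positivity) (fun n => by have := facWeight_pos s n; positivity)
    (fun n j hj hjk hg => (w1 n j k hg hkT.1).1)
    (fun n j hj hjk hg => (w1 n k j (by omega) hj).2)
    (fun n j hj hjk hg => (w2 n j k hg hkT.1).1)
    (fun n j hj hjk hg => (w2 n k j (by omega) hj).2)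
    (by
      refine squeeze_zero' (Eventually.of_forall fun n => ?_) ?_
        (tendsto_pow_atTop_nhds_zero_of_lt_one (r := B⁻¹) (by positivity)
          (inv_lt_one_of_one_lt₀ (by linarith)))
      · have := facWeight_pos s n; positivity
      · filter_upwards [hv] with n hn
        have := facWeight_pos s n
        rw [div_le_iff₀ (by positivity), ← mul_assoc, ← mul_pow,
          inv_mul_cancel₀ (by positivity), one_pow, one_mul]
        exact hn)
  exact ⟨B, C, by linarith, fun n => by simpa using h n⟩

/-- A gap in the possible growth, lower side: a solution decaying faster than every geometric sequence
is `O((n!) ^ (-1 / (2 s)))`. The pivot is the smallest index whose polynomial has maximal degree, and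
the comparison weights are the reciprocals of those for infinite growth. -/
theorem gap_radius_top (s : ℕ) (hs : 1 ≤ s) (P : ℕ → ℂ[X]) (hP : P s ≠ 0) (v : ℕ → ℂ)
    (hrec : ∀ n : ℕ, ∑ j ∈ Finset.range (s + 1), (P j).eval (n : ℂ) * v (n + j) = 0)
    (hv : ∀ B : ℝ, ∃ r > B, ∃ C : ℝ, ∀ n, ‖v n‖ * r ^ n ≤ C) :
    ∃ C : ℝ, 0 < C ∧ ∀ n, ‖v n‖ ≤ C / facWeight s n := by
  obtain ⟨D, hD, hex⟩ := exists_top_degree s P hP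
  classical
  obtain ⟨k, hkT, hkmin⟩ := Finset.exists_min_image
    ((Finset.range (s + 1)).filter fun j => (P j).coeff D ≠ 0) id
    (by obtain ⟨j, hj, h⟩ := hex; exact ⟨j, by simp [h]; omega⟩)
  simp only [Finset.mem_filter, Finset.mem_range, Nat.lt_succ_iff, id] at hkT hkmin
  obtain ⟨A, hA1, hA⟩ := ratio_bounds s P D k hD hkT.1 hkT.2
  set B : ℝ := 2 * (s + 1) * A with hB
  have hB2 : 2 ≤ B := by
    have : (0 : ℝ) ≤ s := by positivity
    rw [hB]; nlinarith
  have w1 := weight_bounds s B (by linarith) (fun _ => 1) (fun _ => one_pos)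
    (fun _ _ _ => le_rfl) (fun n i j _ _ => by
      rw [one_mul]; exact Real.one_le_sqrt.2 (by exact_mod_cast (by omega : 1 ≤ n + s)))
  have w2 := weight_bounds s B (by linarith) (facWeight s) (facWeight_pos s)
    (fun m n h => facWeight_mono s h) (fun n i j => facWeight_add_le s hs n i j)
  -- Taking reciprocals of the weights swaps the roles of the two bounds.
  have inv1 : ∀ x y : ℝ, 0 < x → 0 < y → B * x ≤ y → B * y⁻¹ ≤ x⁻¹ := by
    intro x y hx hy h
    rw [← div_eq_mul_inv, div_le_iff₀ hy, inv_mul_eq_div, le_div_iff₀ hx]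
    exact h
  have inv2 : ∀ x y z : ℝ, 0 < x → 0 < y → y ≤ x * z → x⁻¹ ≤ y⁻¹ * z := by
    intro x y z hx hy h
    rw [inv_mul_eq_div, le_div_iff₀ hy, inv_mul_le_iff₀ hx]
    exact h
  have p1 : ∀ n, 0 < B ^ n * 1 := fun n => by positivity
  have p2 : ∀ n, 0 < B ^ n * facWeight s n := fun n => by
    have := facWeight_pos s n; positivity
  obtain ⟨r, hr, C₀, hC₀⟩ := hv B
  obtain ⟨C, hC, h⟩ := core_comparison s P v k hkT.1 hrec A B hA1 hB (fun j => k < j)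
    (hA.mono fun n hn => ⟨hn.1, fun j hj hjk => ⟨(hn.2 j hj).1, fun hlt => (hn.2 j hj).2 (by
      by_contra h0
      have := hkmin j ⟨hj, h0⟩
      omega)⟩⟩)
    (fun n => (B ^ n * facWeight s n)⁻¹) (fun n => (B ^ n * 1)⁻¹)
    (fun n => inv_pos.2 (p2 n)) (fun n => inv_pos.2 (p1 n))
    (fun n j hj hjk hg => inv1 _ _ (p2 _) (p2 _) (w2 n k j hg hj).1)
    (fun n j hj hjk hg => inv2 _ _ _ (p2 _) (p2 _) (w2 n j k (by omega) hkT.1).2)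
    (fun n j hj hjk hg => inv1 _ _ (p1 _) (p1 _) (w1 n k j hg hj).1)
    (fun n j hj hjk hg => inv2 _ _ _ (p1 _) (p1 _) (w1 n j k (by omega) hkT.1).2)
    (by
      have hr0 : 0 < r := by linarith
      have h0 : Tendsto (fun n : ℕ => C₀ * (B / r) ^ n) atTop (𝓝 (C₀ * 0)) :=
        (tendsto_pow_atTop_nhds_zero_of_lt_one (by positivity)
          ((div_lt_one hr0).2 hr)).const_mul _
      rw [mul_zero] at h0
      refine squeeze_zero (fun n => ?_) (fun n => ?_) h0
      · positivity
      · have := hC₀ n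
        rw [mul_one, div_inv_eq_mul, div_pow, ← mul_div_assoc, le_div_iff₀ (by positivity)]
        calc ‖v n‖ * B ^ n * r ^ n = (‖v n‖ * r ^ n) * B ^ n := by ring
          _ ≤ C₀ * B ^ n := by gcongr)
  refine ⟨C, hC, fun n => (h n).trans ?_⟩
  have := facWeight_pos s n
  have : 1 ≤ B ^ n := one_le_pow₀ (by linarith)
  rw [← div_eq_mul_inv]
  gcongr
  nlinarith

/-! ### The recurrence satisfied by the coefficients of a D-finite series -/

lemma coeff_psDeriv_iterate {k : Type*} [Field k] (f : PowerSeries k) (m n : ℕ) :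
    PowerSeries.coeff n (psDeriv^[m] f) =
      ((n + 1).ascFactorial m : k) * PowerSeries.coeff (n + m) f :=
  PowerSeries.coeff_iterate_derivative f m n

/-- The coefficient is taken at `n + L`, where no truncation of the convolution occurs, which makes the
formula uniform in `n`. -/
lemma coeff_polynomial_mul {k : Type*} [Field k] (A : k[X]) (g : PowerSeries k) (L n : ℕ)
    (hA : A.natDegree ≤ L) :
    PowerSeries.coeff (n + L) ((A : PowerSeries k) * g) =
      ∑ l ∈ Finset.range (L + 1), A.coeff l * PowerSeries.coeff (n + (L - l)) g := by
  rw [PowerSeries.coeff_mul, Finset.Nat.sum_antidiagonal_eq_sum_range_succ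
    (fun i j => PowerSeries.coeff i (A : PowerSeries k) * PowerSeries.coeff j g)]
  symm
  apply Finset.sum_subset_zero_on_sdiff
  · intro x; simp only [Finset.mem_range]; omega
  · intro x hx
    simp only [Finset.mem_sdiff, Finset.mem_range] at hx
    rw [Polynomial.coeff_coe, Polynomial.coeff_eq_zero_of_natDegree_lt (by omega), zero_mul]
  · intro x hx
    simp only [Finset.mem_range] at hx
    rw [Polynomial.coeff_coe]
    congr 3; omega

/-- The coefficients of a D-finite series satisfy a linear recurrence with polynomial
coefficients. It is nontrivial because only the term of top order `A 0` contributes to the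
coefficient of degree `p` in the polynomials of the recurrence. -/
theorem exists_recurrence {K : Type*} [Field K] [CharZero K] (a : ℕ → K)
    (h : IsDFinite (PowerSeries.mk a)) :
    ∃ (s : ℕ) (P : ℕ → K[X]), P s ≠ 0 ∧
      ∀ n : ℕ, ∑ j ∈ Finset.range (s + 1), (P j).eval (n : K) * a (n + j) = 0 := by
  obtain ⟨p, A, hA0, hA⟩ := h
  obtain ⟨L, hL⟩ : ∃ L, ∀ i, (A i).natDegree ≤ L :=
    ⟨Finset.univ.sup fun i => (A i).natDegree,
      fun i => Finset.le_sup (f := fun i => (A i).natDegree) (Finset.mem_univ i)⟩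
  set Q : ℕ → ℕ → K[X] := fun m t => (ascPochhammer K m).comp (Polynomial.X + Polynomial.C (t : K))
    with hQ
  set R : ℕ → K[X] := fun j => ∑ i : Fin (p + 1), ∑ l ∈ Finset.range (L + 1),
    if L - l + (p - i.val) = j then Polynomial.C ((A i).coeff l) * Q (p - i.val) (L - l + 1) else 0
    with hR
  have hQeval : ∀ m t n : ℕ, (Q m t).eval (n : K) = ((n + t).ascFactorial m : K) := by
    intro m t n
    rw [hQ, Nat.cast_ascFactorial]
    simp
  have hrec : ∀ n : ℕ, ∑ j ∈ Finset.range (L + p + 1), (R j).eval (n : K) * a (n + j) = 0 := by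
    intro n
    have h1 := congrArg (PowerSeries.coeff (n + L)) hA
    rw [map_sum, map_zero] at h1
    rw [← h1]
    simp only [hR, Polynomial.eval_finsetSum, Finset.sum_mul]
    rw [Finset.sum_comm]
    refine Finset.sum_congr rfl fun i _ => ?_
    rw [coeff_polynomial_mul _ _ L n (hL i), Finset.sum_comm]
    refine Finset.sum_congr rfl fun l hl => ?_
    have hmem : L - l + (p - i.val) ∈ Finset.range (L + p + 1) := by
      simp only [Finset.mem_range]; omega
    rw [Finset.sum_eq_single_of_mem _ hmem]
    · rw [if_pos rfl, Polynomial.eval_mul, Polynomial.eval_C, hQeval, coeff_psDeriv_iterate,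
        PowerSeries.coeff_mk, mul_assoc]
      congr 3
      ring
    · intro j _ hj
      rw [if_neg (Ne.symm hj)]; simp
  -- The coefficient of `x ^ p` in `R j` only sees the top-order coefficient `A 0`.
  obtain ⟨l₀, hl₀⟩ : ∃ l, (A 0).coeff l ≠ 0 := by
    by_contra! hcon
    exact hA0 (Polynomial.ext hcon)
  have hl₀L : l₀ ≤ L := (Polynomial.le_natDegree_of_ne_zero hl₀).trans (hL 0)
  have hQdeg : ∀ m t, (Q m t).natDegree = m := by
    intro m t
    rw [hQ]
    simp only [Polynomial.natDegree_comp, ascPochhammer_natDegree, Polynomial.natDegree_X_add_C,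
      mul_one]
  have hQmonic : ∀ m t, (Q m t).Monic := fun m t => (monic_ascPochhammer K m).comp_X_add_C _
  have hRne : R (L - l₀ + p) ≠ 0 := by
    intro h0
    have h1 : (R (L - l₀ + p)).coeff p = (A 0).coeff l₀ := by
      simp only [hR, Polynomial.finsetSum_coeff]
      rw [Finset.sum_eq_single_of_mem (0 : Fin (p + 1)) (Finset.mem_univ _)]
      · rw [Finset.sum_eq_single_of_mem l₀ (by simp only [Finset.mem_range]; omega)]
        · have := (hQmonic p (L - l₀ + 1)).coeff_natDegree
          rw [hQdeg] at this
          simp [this]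
        · intro l hl hne
          simp only [Finset.mem_range] at hl
          rw [if_neg (by simp; omega)]; simp
      · intro i _ hi
        have hi' : i.val ≠ 0 := fun h => hi (Fin.ext h)
        refine Finset.sum_eq_zero fun l _ => ?_
        split_ifs
        · have hlt : (Q (p - i.val) (L - l + 1)).natDegree < p := by
            rw [hQdeg]; have := i.isLt; omega
          rw [Polynomial.coeff_C_mul, Polynomial.coeff_eq_zero_of_natDegree_lt hlt, mul_zero]
        · simp
    rw [h0, Polynomial.coeff_zero] at h1
    exact hl₀ h1.symm
  classical
  obtain ⟨s, hsT, hsmax⟩ := Finset.exists_max_image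
    ((Finset.range (L + p + 1)).filter fun j => R j ≠ 0) id
    ⟨L - l₀ + p, by simp only [Finset.mem_filter, Finset.mem_range]; exact ⟨by omega, hRne⟩⟩
  simp only [Finset.mem_filter, Finset.mem_range, id] at hsT hsmax
  refine ⟨s, R, hsT.2, fun n => ?_⟩
  rw [← hrec n]
  apply Finset.sum_subset_zero_on_sdiff
  · intro x; simp only [Finset.mem_range]; omega
  · intro x hx
    simp only [Finset.mem_sdiff, Finset.mem_range] at hx
    have : R x = 0 := by
      by_contra hne
      have := hsmax x ⟨hx.1, hne⟩
      omega
    rw [this]; simp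
  · intros; rfl

open NumberField in
/-- Clearing denominators: the recurrence may be taken with coefficients in `𝓞 K`. -/
theorem exists_integral_recurrence {K : Type*} [Field K] [NumberField K] (a : ℕ → K)
    (h : IsDFinite (PowerSeries.mk a)) :
    ∃ (s : ℕ) (P : ℕ → (𝓞 K)[X]), P s ≠ 0 ∧ ∀ n : ℕ, ∑ j ∈ Finset.range (s + 1),
        algebraMap (𝓞 K) K ((P j).eval (n : 𝓞 K)) * a (n + j) = 0 := by
  obtain ⟨s, R, hRs, hR⟩ := exists_recurrence a h
  classical
  obtain ⟨b, hb⟩ := IsLocalization.exist_integer_multiples_of_finset (nonZeroDivisors (𝓞 K))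
    ((Finset.range (s + 1)).biUnion fun j => (R j).coeffs)
  have hb0 : algebraMap (𝓞 K) K b ≠ 0 := by
    simp
  have h1 : ∀ j, ∃ P : (𝓞 K)[X], j ≤ s →
      P.map (algebraMap (𝓞 K) K) = Polynomial.C (algebraMap (𝓞 K) K b) * R j := by
    intro j
    by_cases hj : j ≤ s
    · have : Polynomial.C (algebraMap (𝓞 K) K b) * R j ∈ Polynomial.lifts (algebraMap (𝓞 K) K) := by
        rw [Polynomial.lifts_iff_coeff_lifts]
        intro m
        rw [Polynomial.coeff_C_mul]
        by_cases h0 : (R j).coeff m = 0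
        · exact ⟨0, by simp [h0]⟩
        · obtain ⟨x, hx⟩ := hb ((R j).coeff m) (Finset.mem_biUnion.2
            ⟨j, by simp only [Finset.mem_range]; omega, Polynomial.coeff_mem_coeffs h0⟩)
          exact ⟨x, by rw [hx, Algebra.smul_def]⟩
      obtain ⟨P, hP⟩ := (Polynomial.mem_lifts _).1 this
      exact ⟨P, fun _ => hP⟩
    · exact ⟨0, fun h => absurd h hj⟩
  choose P hP using h1
  refine ⟨s, P, ?_, fun n => ?_⟩
  · intro h0
    have := hP s le_rfl
    rw [h0, Polynomial.map_zero] at this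
    exact (mul_ne_zero (Polynomial.C_ne_zero.2 hb0) hRs) this.symm
  · have h2 : ∀ j ∈ Finset.range (s + 1), algebraMap (𝓞 K) K ((P j).eval (n : 𝓞 K)) * a (n + j) =
        algebraMap (𝓞 K) K b * ((R j).eval (n : K) * a (n + j)) := by
      intro j hj
      have h3 := congrArg (Polynomial.eval (n : K)) (hP j (by simpa [Nat.lt_succ_iff] using hj))
      rw [← map_natCast (algebraMap (𝓞 K) K) n, Polynomial.eval_map_apply] at h3
      rw [h3]; simp [mul_assoc]
    rw [Finset.sum_congr rfl h2, ← Finset.mul_sum, hR, mul_zero]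

/-! ### Growth of windows, logarithmic estimates and density -/

lemma poly_ratio_le_pow (p q : ℂ[X]) (hq : q ≠ 0) :
    ∃ E : ℕ, ∀ᶠ n : ℕ in atTop, q.eval (n : ℂ) ≠ 0 ∧
      ‖p.eval (n : ℂ)‖ / ‖q.eval (n : ℂ)‖ ≤ (n : ℝ) ^ E := by
  set m := p.natDegree with hm
  obtain ⟨A, hA⟩ := poly_ratio_bound p (q * Polynomial.X ^ m) (q.natDegree + m) (by omega)
    (by rw [Polynomial.natDegree_mul_X_pow m hq])
    (by rw [Polynomial.coeff_mul_X_pow]; exact Polynomial.leadingCoeff_ne_zero.2 hq)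
  refine ⟨m + 1, ?_⟩
  filter_upwards [hA, eventually_gt_atTop 0, eventually_ge_atTop ⌈A⌉₊] with n hn hn0 hnA
  have hn' : (0 : ℝ) < n := by exact_mod_cast hn0
  have hAn : A ≤ n := (Nat.le_ceil A).trans (by exact_mod_cast hnA)
  have h1 : q.eval (n : ℂ) ≠ 0 := fun h => hn.1 (by simp [h])
  refine ⟨h1, ?_⟩
  have h2 := hn.2
  have hqpos : 0 < ‖q.eval (n : ℂ)‖ := norm_pos_iff.2 h1
  simp only [Polynomial.eval_mul, Polynomial.eval_pow, Polynomial.eval_X, norm_mul, norm_pow,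
    Complex.norm_natCast] at h2
  rw [← div_div, div_le_iff₀ (by positivity)] at h2
  calc _ ≤ A * (n : ℝ) ^ m := h2
    _ ≤ n * (n : ℝ) ^ m := by gcongr
    _ = _ := by ring

/-- Forward propagation: windows of `s` consecutive terms grow by at most a polynomial factor
in each step. -/
theorem window_growth (s : ℕ) (P : ℕ → ℂ[X]) (hP : P s ≠ 0) (v : ℕ → ℂ)
    (hrec : ∀ n : ℕ, ∑ j ∈ Finset.range (s + 1), (P j).eval (n : ℂ) * v (n + j) = 0) :
    ∃ E : ℕ, ∀ᶠ n : ℕ in atTop,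
      ∑ j ∈ Finset.range s, ‖v (n + 1 + j)‖ ≤
        (n : ℝ) ^ E * ∑ j ∈ Finset.range s, ‖v (n + j)‖ := by
  choose E hE using fun j => poly_ratio_le_pow (P j) (P s) hP
  refine ⟨(Finset.range s).sup E + 1, ?_⟩
  have h1 : ∀ᶠ n : ℕ in atTop, ∀ j ∈ Finset.range s,
      ‖(P j).eval (n : ℂ)‖ / ‖(P s).eval (n : ℂ)‖ ≤ (n : ℝ) ^ E j :=
    (Filter.eventually_all_finset _).2 fun j _ => (hE j).mono fun n hn => hn.2
  filter_upwards [h1, hE 0, eventually_ge_atTop 2] with n hn h0 hn2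
  have hn2' : (2 : ℝ) ≤ n := by exact_mod_cast hn2
  set E₀ := (Finset.range s).sup E
  have h2 : ‖v (n + s)‖ ≤ (n : ℝ) ^ E₀ * ∑ j ∈ Finset.range s, ‖v (n + j)‖ := by
    have h3 := recurrence_solve s P v s n le_rfl (hrec n) h0.1
    rw [Finset.range_add_one, Finset.erase_insert (by simp)] at h3
    rw [Finset.mul_sum]
    refine h3.trans (Finset.sum_le_sum fun j hj => ?_)
    have h4 : (n : ℝ) ^ E j ≤ (n : ℝ) ^ E₀ :=
      pow_le_pow_right₀ (by linarith) (Finset.le_sup hj)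
    exact mul_le_mul_of_nonneg_right ((hn j hj).trans h4) (norm_nonneg _)
  have h5 : ∑ j ∈ Finset.range s, ‖v (n + 1 + j)‖ ≤
      ∑ j ∈ Finset.range s, ‖v (n + j)‖ + ‖v (n + s)‖ := by
    rw [← Finset.sum_range_succ (fun j => ‖v (n + j)‖), Finset.sum_range_succ']
    have : ∑ j ∈ Finset.range s, ‖v (n + 1 + j)‖ = ∑ j ∈ Finset.range s, ‖v (n + (j + 1))‖ :=
      Finset.sum_congr rfl fun j _ => by rw [show n + 1 + j = n + (j + 1) by ring]
    rw [this]
    linarith [norm_nonneg (v (n + 0))]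
  have hV : 0 ≤ ∑ j ∈ Finset.range s, ‖v (n + j)‖ := Finset.sum_nonneg fun _ _ => norm_nonneg _
  have h6 : 1 ≤ (n : ℝ) ^ E₀ := one_le_pow₀ (by linarith)
  have h7 : 1 + (n : ℝ) ^ E₀ ≤ (n : ℝ) ^ (E₀ + 1) := by
    rw [pow_succ]; nlinarith
  calc _ ≤ (1 + (n : ℝ) ^ E₀) * ∑ j ∈ Finset.range s, ‖v (n + j)‖ := by linarith
    _ ≤ _ := by gcongr

lemma iterate_growth (V : ℕ → ℝ) (hV : ∀ n, 0 ≤ V n) (E n₁ : ℕ)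
    (h : ∀ n ≥ n₁, V (n + 1) ≤ (n : ℝ) ^ E * V n) (m n : ℕ) (hm : n₁ ≤ m) (hmn : m ≤ n) :
    V n ≤ (n : ℝ) ^ (E * (n - m)) * V m := by
  induction n, hmn using Nat.le_induction with
  | base => simp
  | succ n hmn ih =>
    have hVm := hV m
    calc V (n + 1) ≤ (n : ℝ) ^ E * V n := h n (by omega)
      _ ≤ (n : ℝ) ^ E * ((n : ℝ) ^ (E * (n - m)) * V m) := by gcongr
      _ = (n : ℝ) ^ (E * (n + 1 - m)) * V m := by
          rw [show n + 1 - m = (n - m) + 1 by omega]; ring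
      _ ≤ _ := by push_cast; gcongr; linarith

lemma tendsto_nlogn : Tendsto (fun n : ℕ => (n : ℝ) * Real.log n) atTop atTop :=
  tendsto_natCast_atTop_atTop.atTop_mul_atTop₀
    (Real.tendsto_log_atTop.comp tendsto_natCast_atTop_atTop)

/-- Multiplicative growth by a factor `n ^ E` in each step accumulates to `exp (O(n log n))`. -/
lemma log_growth (V : ℕ → ℝ) (hV : ∀ n, 0 ≤ V n) (E : ℕ)
    (h : ∀ᶠ n : ℕ in atTop, V (n + 1) ≤ (n : ℝ) ^ E * V n) :
    ∃ C : ℝ, 0 < C ∧ ∀ᶠ n : ℕ in atTop, Real.log (max 1 (V n)) ≤ C * (n * Real.log n) := by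
  obtain ⟨n₁, hn₁⟩ := eventually_atTop.1 (h.and (eventually_ge_atTop 1))
  set n₂ := max n₁ 1
  set M := max 1 (V n₂)
  have hM : 1 ≤ M := le_max_left _ _
  refine ⟨E + 1, by positivity, ?_⟩
  filter_upwards [eventually_ge_atTop n₂, tendsto_nlogn.eventually_ge_atTop (Real.log M)]
    with n hn hlog
  have hn1 : 1 ≤ n := (le_max_right _ _).trans hn
  have hn' : (1 : ℝ) ≤ n := by exact_mod_cast hn1
  have h1 := iterate_growth V hV E n₂
    (fun n hn => (hn₁ n ((le_max_left _ _).trans hn)).1) n₂ n le_rfl hn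
  have h2 : max 1 (V n) ≤ (n : ℝ) ^ (E * n) * M := by
    have h3 : 1 ≤ (n : ℝ) ^ (E * n) := one_le_pow₀ hn'
    refine max_le (by nlinarith) (h1.trans ?_)
    have h4 : (n : ℝ) ^ (E * (n - n₂)) ≤ (n : ℝ) ^ (E * n) :=
      pow_le_pow_right₀ hn' (Nat.mul_le_mul_left _ (Nat.sub_le _ _))
    have h5 : V n₂ ≤ M := le_max_right _ _
    have := hV n₂
    gcongr
  calc Real.log (max 1 (V n)) ≤ Real.log ((n : ℝ) ^ (E * n) * M) :=
        Real.log_le_log (by positivity) h2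
    _ = E * (n * Real.log n) + Real.log M := by
        rw [Real.log_mul (by positivity) (by positivity), Real.log_pow]; push_cast; ring
    _ ≤ _ := by linarith

lemma log_factorial_ge : ∀ᶠ n : ℕ in atTop,
    1 / 2 * ((n : ℝ) * Real.log n) ≤ Real.log n.factorial := by
  have h1 : ∀ᶠ n : ℕ in atTop, (2 : ℝ) ≤ Real.log n :=
    (Real.tendsto_log_atTop.comp tendsto_natCast_atTop_atTop).eventually_ge_atTop 2
  filter_upwards [h1, eventually_gt_atTop 0] with n hn hn0
  have hn' : (0 : ℝ) < n := by exact_mod_cast hn0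
  have h2 := Real.pow_div_factorial_le_exp (x := n) hn'.le n
  have hf : (0 : ℝ) < n.factorial := by exact_mod_cast n.factorial_pos
  have h3 := Real.log_le_log (by positivity) h2
  rw [Real.log_div (by positivity) hf.ne', Real.log_pow, Real.log_exp] at h3
  nlinarith

lemma log_facWeight_ge (s : ℕ) (hs : 1 ≤ s) : ∀ᶠ n : ℕ in atTop,
    1 / (4 * s) * ((n : ℝ) * Real.log n) ≤ Real.log (facWeight s n) := by
  filter_upwards [log_factorial_ge] with n hn
  have hs' : (0 : ℝ) < s := by exact_mod_cast hs
  rw [facWeight, Real.log_rpow (by exact_mod_cast n.factorial_pos)]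
  calc _ = 1 / (2 * s : ℝ) * (1 / 2 * ((n : ℝ) * Real.log n)) := by ring
    _ ≤ _ := by gcongr

/-- A set meeting every window of length `s` inside `[(1 - δ) N, N]`, for arbitrarily large `N`,
has positive upper density. -/
theorem posUpperDensity_of_windows (S : Set ℕ) (s : ℕ) (hs : 1 ≤ s) (δ : ℝ) (hδ : 0 < δ)
    (hδ1 : δ < 1)
    (h : ∃ᶠ N : ℕ in atTop, ∀ n : ℕ, (1 - δ) * N ≤ n → n + s ≤ N →
      ∃ j < s, n + j ∈ S) : HasPosUpperDensity S := by
  have hs' : (0 : ℝ) < s := by exact_mod_cast hs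
  have hbdd : ∀ n : ℕ, ((S ∩ Set.Icc 1 n).ncard : ℝ) / n ≤ 1 := by
    intro n
    have h1 : (S ∩ Set.Icc 1 n).ncard ≤ n := by
      calc (S ∩ Set.Icc 1 n).ncard ≤ (Set.Icc 1 n).ncard :=
            Set.ncard_le_ncard Set.inter_subset_right (Set.finite_Icc _ _)
        _ = n := by rw [← Finset.coe_Icc, Set.ncard_coe_finset]; simp
    exact div_le_one_of_le₀ (by exact_mod_cast h1) (by positivity)
  have key : ∃ᶠ N : ℕ in atTop, δ / (2 * s) ≤ ((S ∩ Set.Icc 1 N).ncard : ℝ) / N := by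
    refine (h.and_eventually (eventually_ge_atTop (⌈2 * s / δ⌉₊ + 1))).mono ?_
    rintro N ⟨hN, hNl⟩
    have hN0 : (0 : ℝ) < N := by exact_mod_cast (by omega : 0 < N)
    have hNl' : 2 * s / δ ≤ N := by
      have h0 : ⌈2 * s / δ⌉₊ ≤ N := by omega
      exact (Nat.le_ceil _).trans (Nat.cast_le.2 h0)
    -- `t` disjoint windows of length `s`, counted backwards from `N`, fit into `[(1 - δ) N, N]`.
    set t := ⌊δ * N / s⌋₊ with ht
    have ht1 : (t : ℝ) ≤ δ * N / s := Nat.floor_le (by positivity)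
    have hst : (s * t : ℝ) ≤ δ * N := by
      rw [le_div_iff₀ hs'] at ht1; linarith
    have ht2 : δ * N / s < t + 1 := Nat.lt_floor_add_one _
    have hstN : s * t ≤ N := by
      have : (s * t : ℝ) ≤ N := by nlinarith
      exact_mod_cast this
    have hw : ∀ i : Fin t, ∃ m, m ∈ S ∩ Set.Icc 1 N ∧ N - s * (i + 1) ≤ m ∧ m < N - s * i := by
      intro i
      have h1 : s * (i + 1) ≤ s * t := Nat.mul_le_mul_left _ i.isLt
      have h2 : s * (i + 1) = s * i + s := by ring
      have h3 : (1 - δ) * N ≤ ((N - s * (i + 1) : ℕ) : ℝ) := by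
        rw [Nat.cast_sub (by omega)]
        have : ((s * (i + 1) : ℕ) : ℝ) ≤ s * t := by exact_mod_cast h1
        linarith
      obtain ⟨j, hj, hjS⟩ := hN _ h3 (by omega)
      have h4 : 0 < N - s * (i + 1) := by
        have : (0 : ℝ) < ((N - s * (i + 1) : ℕ) : ℝ) :=
          lt_of_lt_of_le (mul_pos (by linarith) hN0) h3
        exact_mod_cast this
      exact ⟨_, ⟨hjS, by simp only [Set.mem_Icc]; omega⟩, by omega, by omega⟩
    choose m hmS hm1 hm2 using hw
    have hinj : Function.Injective m := by
      have hlt : ∀ i j : Fin t, i < j → m j < m i := by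
        intro i j hij
        have h1 : s * (i.val + 1) ≤ s * j.val := Nat.mul_le_mul_left _ hij
        have := hm1 i
        have := hm2 j
        omega
      exact (show StrictAnti m from fun i j hij => hlt i j hij).injective
    have hcard : t ≤ (S ∩ Set.Icc 1 N).ncard := by
      calc t = (Set.range m).ncard := by
            rw [← Set.image_univ, Set.ncard_image_of_injective _ hinj]; simp
        _ ≤ _ := Set.ncard_le_ncard (by rintro _ ⟨i, rfl⟩; exact hmS i)
            ((Set.finite_Icc 1 N).inter_of_right S)
    rw [le_div_iff₀ hN0]
    have h5 : (t : ℝ) ≤ (S ∩ Set.Icc 1 N).ncard := by exact_mod_cast hcard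
    rw [div_le_iff₀ hδ] at hNl'
    rw [div_lt_iff₀ hs'] at ht2
    refine le_trans ?_ h5
    rw [div_mul_eq_mul_div, div_le_iff₀ (by positivity)]
    nlinarith
  have : δ / (2 * s) ≤ upperDensity S :=
    le_limsup_of_frequently_le key ⟨1, by simpa using ⟨0, fun n _ => hbdd n⟩⟩
  exact lt_of_lt_of_le (by positivity) this

/-! ### Denominators and heights -/

open NumberField in
lemma mem_denIdeal {K : Type*} [Field K] [NumberField K] (α : K) (x : 𝓞 K) :
    x ∈ denIdeal K α ↔ ∃ y : 𝓞 K, algebraMap (𝓞 K) K y = algebraMap (𝓞 K) K x * α := by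
  rw [denIdeal, Submodule.mem_colon]
  constructor
  · intro h
    obtain ⟨y, hy⟩ := Submodule.mem_one.1 (h α (Submodule.mem_span_singleton_self α))
    exact ⟨y, by rw [hy, Algebra.smul_def]⟩
  · rintro ⟨y, hy⟩ p hp
    obtain ⟨z, rfl⟩ := Submodule.mem_span_singleton.1 hp
    exact Submodule.mem_one.2 ⟨z * y, by simp [Algebra.smul_def, hy]; ring⟩

open NumberField in
/-- The norm of a principal ideal is the product of the archimedean absolute values of a generator. -/
lemma log_absNorm_span {K : Type*} [Field K] [NumberField K] (x : 𝓞 K) (hx : x ≠ 0) :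
    Real.log (Ideal.absNorm (Ideal.span {x})) =
      ∑ σ : K →+* ℂ, Real.log ‖σ (algebraMap (𝓞 K) K x)‖ := by
  have h1 : ((Ideal.absNorm (Ideal.span {x}) : ℕ) : ℝ) =
      ∏ σ : K →+* ℂ, ‖σ (algebraMap (𝓞 K) K x)‖ := by
    have h2 := Algebra.norm_eq_prod_embeddings ℚ ℂ (algebraMap (𝓞 K) K x)
    rw [← Algebra.coe_norm_int] at h2
    have h3 := congrArg norm h2
    rw [norm_prod] at h3
    rw [Ideal.absNorm_span_singleton, ← Fintype.prod_equiv (RingHom.equivRatAlgHom (R := K) (S := ℂ)).symm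
      (fun σ => ‖σ (algebraMap (𝓞 K) K x)‖) _ (fun _ => rfl), ← h3]
    simp [Nat.cast_natAbs]
  rw [h1, Real.log_prod]
  intro σ _
  simpa using hx

open NumberField in
lemma denIdeal_ne_bot {K : Type*} [Field K] [NumberField K] (α : K) : denIdeal K α ≠ ⊥ := by
  obtain ⟨b, y, hy⟩ := IsLocalization.exists_integer_multiple' (nonZeroDivisors (𝓞 K)) α
  intro h
  have : (b : 𝓞 K) ∈ denIdeal K α := (mem_denIdeal _ _).2 ⟨y, by rw [hy]; ring⟩
  rw [h, Ideal.mem_bot] at this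
  exact nonZeroDivisors.ne_zero b.2 this

lemma finrank_mul_weilHeight {K : Type*} [Field K] [NumberField K] (α : K) :
    Module.finrank ℚ K * weilHeight K α = Real.log (Ideal.absNorm (denIdeal K α)) +
      ∑ σ : K →+* ℂ, Real.log (max 1 ‖σ α‖) := by
  have : (0 : ℝ) < Module.finrank ℚ K := by exact_mod_cast Module.finrank_pos
  rw [weilHeight]; field_simp

lemma log_norm_le_weilHeight {K : Type*} [Field K] [NumberField K] (ι : K →+* ℂ) (α : K)
    (hα : α ≠ 0) : Real.log ‖ι α‖ ≤ Module.finrank ℚ K * weilHeight K α := by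
  rw [finrank_mul_weilHeight]
  have h1 : 0 < ‖ι α‖ := by simpa using hα
  have h2 : Real.log ‖ι α‖ ≤ Real.log (max 1 ‖ι α‖) := Real.log_le_log h1 (le_max_right _ _)
  have h3 : Real.log (max 1 ‖ι α‖) ≤ ∑ σ : K →+* ℂ, Real.log (max 1 ‖σ α‖) :=
    Finset.single_le_sum (f := fun σ : K →+* ℂ => Real.log (max 1 ‖σ α‖))
      (fun σ _ => Real.log_nonneg (le_max_left _ _)) (Finset.mem_univ ι)
  have h4 := Real.log_natCast_nonneg (Ideal.absNorm (denIdeal K α))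
  linarith

open NumberField in
/-- Liouville inequality: a nonzero `α` of small absolute value has large height. Writing
`α = x / y` with integral `x` and `y`, the norm of `y` divides that of `x` times the norm of the
denominator ideal, which replaces the product formula. -/
lemma neg_log_norm_le_weilHeight {K : Type*} [Field K] [NumberField K] (ι : K →+* ℂ) (α : K)
    (hα : α ≠ 0) : -Real.log ‖ι α‖ ≤ Module.finrank ℚ K * weilHeight K α := by
  rw [finrank_mul_weilHeight]
  obtain ⟨b, x, hx⟩ := IsLocalization.exists_integer_multiple' (nonZeroDivisors (𝓞 K)) α
  set y : 𝓞 K := (b : 𝓞 K)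
  have hy0 : y ≠ 0 := nonZeroDivisors.ne_zero b.2
  have hy0' : algebraMap (𝓞 K) K y ≠ 0 := by simpa using hy0
  have hx0 : x ≠ 0 := by
    rintro rfl
    rw [map_zero] at hx
    exact (mul_ne_zero hα hy0') hx.symm
  -- The denominator ideal times `x` is contained in the ideal generated by `y`.
  have hdvd : Ideal.absNorm (Ideal.span {y}) ∣
      Ideal.absNorm (Ideal.span {x}) * Ideal.absNorm (denIdeal K α) := by
    rw [← map_mul]
    apply Ideal.absNorm_dvd_absNorm_of_le
    rw [Ideal.span_singleton_mul_le_iff]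
    intro d hd
    obtain ⟨z, hz⟩ := (mem_denIdeal _ _).1 hd
    rw [Ideal.mem_span_singleton]
    refine ⟨z, FaithfulSMul.algebraMap_injective (𝓞 K) K ?_⟩
    rw [map_mul, map_mul, hz, hx]; ring
  have hx1 : 0 < Ideal.absNorm (Ideal.span {x}) := by
    rw [Nat.pos_iff_ne_zero, Ne, Ideal.absNorm_eq_zero_iff, Ideal.span_singleton_eq_bot]; exact hx0
  have hy1 : 0 < Ideal.absNorm (Ideal.span {y}) := by
    rw [Nat.pos_iff_ne_zero, Ne, Ideal.absNorm_eq_zero_iff, Ideal.span_singleton_eq_bot]; exact hy0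
  have hd1 : 0 < Ideal.absNorm (denIdeal K α) := by
    rw [Nat.pos_iff_ne_zero, Ne, Ideal.absNorm_eq_zero_iff]; exact denIdeal_ne_bot α
  have hle := Nat.le_of_dvd (Nat.mul_pos hx1 hd1) hdvd
  have hlog : Real.log (Ideal.absNorm (Ideal.span {y})) ≤
      Real.log (Ideal.absNorm (Ideal.span {x})) + Real.log (Ideal.absNorm (denIdeal K α)) := by
    rw [← Real.log_mul (by exact_mod_cast hx1.ne') (by exact_mod_cast hd1.ne')]
    exact Real.log_le_log (by exact_mod_cast hy1) (by exact_mod_cast hle)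
  rw [log_absNorm_span x hx0, log_absNorm_span y hy0] at hlog
  have hσ : ∀ σ : K →+* ℂ, Real.log ‖σ (algebraMap (𝓞 K) K x)‖ =
      Real.log ‖σ α‖ + Real.log ‖σ (algebraMap (𝓞 K) K y)‖ := by
    intro σ
    rw [hx, map_mul, norm_mul, Real.log_mul (by simpa using hα) (by simpa using hy0)]
  rw [Finset.sum_congr rfl fun σ _ => hσ σ, Finset.sum_add_distrib] at hlog
  classical
  have h5 : ∑ σ : K →+* ℂ, Real.log ‖σ α‖ ≤
      Real.log ‖ι α‖ + ∑ σ : K →+* ℂ, Real.log (max 1 ‖σ α‖) := by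
    rw [← Finset.add_sum_erase _ _ (Finset.mem_univ ι),
      ← Finset.add_sum_erase (Finset.univ) (fun σ : K →+* ℂ => Real.log (max 1 ‖σ α‖))
        (Finset.mem_univ ι)]
    have h6 : ∑ σ ∈ Finset.univ.erase ι, Real.log ‖σ α‖ ≤
        ∑ σ ∈ Finset.univ.erase ι, Real.log (max 1 ‖σ α‖) :=
      Finset.sum_le_sum fun σ _ => Real.log_le_log (by simpa using hα) (le_max_right _ _)
    have h7 : 0 ≤ Real.log (max 1 ‖ι α‖) := Real.log_nonneg (le_max_left _ _)
    linarith
  linarith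

open NumberField in
/-- Any common denominator `d` of `α` bounds the height, because `d` lies in the denominator ideal. -/
lemma weilHeight_le {K : Type*} [Field K] [NumberField K] (α : K) (d : 𝓞 K) (hd : d ≠ 0)
    (h : ∃ y : 𝓞 K, algebraMap (𝓞 K) K y = algebraMap (𝓞 K) K d * α) :
    weilHeight K α ≤ ∑ σ : K →+* ℂ,
      (Real.log (max 1 ‖σ (algebraMap (𝓞 K) K d)‖) + Real.log (max 1 ‖σ α‖)) := by
  have h1 : (1 : ℝ) ≤ Module.finrank ℚ K := by
    exact_mod_cast (Module.finrank_pos : 0 < Module.finrank ℚ K)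
  have hdvd : Ideal.absNorm (denIdeal K α) ∣ Ideal.absNorm (Ideal.span {d}) :=
    Ideal.absNorm_dvd_absNorm_of_le
      ((Ideal.span_singleton_le_iff_mem _).2 ((mem_denIdeal _ _).2 h))
  have hd1 : 0 < Ideal.absNorm (Ideal.span {d}) := by
    rw [Nat.pos_iff_ne_zero, Ne, Ideal.absNorm_eq_zero_iff, Ideal.span_singleton_eq_bot]; exact hd
  have hd2 : 0 < Ideal.absNorm (denIdeal K α) := by
    rw [Nat.pos_iff_ne_zero, Ne, Ideal.absNorm_eq_zero_iff]; exact denIdeal_ne_bot α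
  have hlog : Real.log (Ideal.absNorm (denIdeal K α)) ≤
      ∑ σ : K →+* ℂ, Real.log (max 1 ‖σ (algebraMap (𝓞 K) K d)‖) := by
    calc _ ≤ Real.log (Ideal.absNorm (Ideal.span {d})) :=
          Real.log_le_log (by exact_mod_cast hd2) (by exact_mod_cast Nat.le_of_dvd hd1 hdvd)
      _ = ∑ σ : K →+* ℂ, Real.log ‖σ (algebraMap (𝓞 K) K d)‖ := log_absNorm_span d hd
      _ ≤ _ := Finset.sum_le_sum fun σ _ =>
          Real.log_le_log (by simpa using hd) (le_max_right _ _)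
  have h2 := finrank_mul_weilHeight α
  have h3 : 0 ≤ ∑ σ : K →+* ℂ, Real.log (max 1 ‖σ α‖) :=
    Finset.sum_nonneg fun σ _ => Real.log_nonneg (le_max_left _ _)
  have h4 := Real.log_natCast_nonneg (Ideal.absNorm (denIdeal K α))
  have h5 : 0 ≤ weilHeight K α := by rw [weilHeight]; positivity
  rw [Finset.sum_add_distrib]
  nlinarith

open NumberField in
lemma exists_common_den {K : Type*} [Field K] [NumberField K] (a : ℕ → K) (M : ℕ) :
    ∃ d : 𝓞 K, d ≠ 0 ∧ ∀ m < M, ∃ y : 𝓞 K,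
      algebraMap (𝓞 K) K y = algebraMap (𝓞 K) K d * a m := by
  obtain ⟨b, hb⟩ := IsLocalization.exist_integer_multiples (nonZeroDivisors (𝓞 K))
    (Finset.range M) a
  refine ⟨b, nonZeroDivisors.ne_zero b.2, fun m hm => ?_⟩
  obtain ⟨y, hy⟩ := hb m (by simpa using hm)
  exact ⟨y, by rw [hy, Algebra.smul_def]⟩

open NumberField in
/-- If `d` is a common denominator of the first `n₁ + s` terms, then multiplying it by
`P_s(n₁) ⋯ P_s(n₁ + n - 1)` gives a common denominator of the first `n₁ + n + s` terms. -/
lemma den_recurrence {K : Type*} [Field K] [NumberField K] (a : ℕ → K) (s : ℕ)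
    (P : ℕ → (𝓞 K)[X])
    (hrec : ∀ n : ℕ, ∑ j ∈ Finset.range (s + 1),
        algebraMap (𝓞 K) K ((P j).eval (n : 𝓞 K)) * a (n + j) = 0)
    (n₁ : ℕ) (d : 𝓞 K)
    (hd : ∀ m < n₁ + s, ∃ y : 𝓞 K, algebraMap (𝓞 K) K y = algebraMap (𝓞 K) K d * a m) (n : ℕ) :
    ∀ m < n₁ + n + s, ∃ y : 𝓞 K, algebraMap (𝓞 K) K y =
      algebraMap (𝓞 K) K (d * ∏ i ∈ Finset.range n, (P s).eval ((n₁ + i : ℕ) : 𝓞 K)) * a m := by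
  induction n with
  | zero => simpa using hd
  | succ n ih =>
    intro m hm
    rw [Finset.prod_range_succ, ← mul_assoc]
    set e := d * ∏ i ∈ Finset.range n, (P s).eval ((n₁ + i : ℕ) : 𝓞 K)
    rcases (show m < n₁ + n + s ∨ m = n₁ + n + s by omega) with h | rfl
    · obtain ⟨y, hy⟩ := ih m h
      exact ⟨y * (P s).eval ((n₁ + n : ℕ) : 𝓞 K), by rw [map_mul, map_mul, hy]; ring⟩
    · choose! y hy using ih
      refine ⟨-∑ j ∈ Finset.range s, (P j).eval ((n₁ + n : ℕ) : 𝓞 K) * y (n₁ + n + j), ?_⟩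
      have h1 := hrec (n₁ + n)
      rw [Finset.sum_range_succ] at h1
      rw [map_mul, mul_assoc, eq_neg_of_add_eq_zero_right h1, map_neg, map_sum, mul_neg,
        Finset.mul_sum]
      congr 1
      refine Finset.sum_congr rfl fun j hj => ?_
      rw [map_mul, hy _ (by simpa using hj)]; ring

/-! ### Bounds for the heights of the coefficients -/

lemma exists_polynomial_of_eventually_zero {K : Type*} [Field K] (a : ℕ → K)
    (h : ∀ᶠ n in atTop, a n = 0) : ∃ P : K[X], PowerSeries.mk a = (P : PowerSeries K) := by
  obtain ⟨N, hN⟩ := eventually_atTop.1 h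
  refine ⟨PowerSeries.trunc N (PowerSeries.mk a), ?_⟩
  ext n
  rw [Polynomial.coeff_coe, PowerSeries.coeff_trunc]
  split_ifs with hn
  · rfl
  · rw [PowerSeries.coeff_mk, hN n (by omega)]

open NumberField in
/-- A recurrence over `𝓞 K`, transported to `ℂ` by an embedding. -/
lemma recurrence_map {K : Type*} [Field K] [NumberField K] (a : ℕ → K) (s : ℕ)
    (P : ℕ → (𝓞 K)[X]) (hP : P s ≠ 0)
    (hrec : ∀ n : ℕ, ∑ j ∈ Finset.range (s + 1),
        algebraMap (𝓞 K) K ((P j).eval (n : 𝓞 K)) * a (n + j) = 0) (σ : K →+* ℂ) :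
    (P s).map (σ.comp (algebraMap (𝓞 K) K)) ≠ 0 ∧
    ∀ n : ℕ, ∑ j ∈ Finset.range (s + 1),
      ((P j).map (σ.comp (algebraMap (𝓞 K) K))).eval (n : ℂ) * σ (a (n + j)) = 0 := by
  constructor
  · have hinj : Function.Injective (σ.comp (algebraMap (𝓞 K) K)) := by
      rw [RingHom.coe_comp]
      exact σ.injective.comp (FaithfulSMul.algebraMap_injective (𝓞 K) K)
    exact (Polynomial.map_ne_zero_iff hinj).2 hP
  · intro n
    have := congrArg σ (hrec n)
    rw [map_sum, map_zero] at this
    rw [← this]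
    refine Finset.sum_congr rfl fun j _ => ?_
    rw [map_mul, Polynomial.eval_natCast_map, RingHom.comp_apply]

open NumberField in
/-- Upper bound for the height. The common denominators `d ∏ P_s(i)` and, for each embedding `σ`, the
windows of `‖σ (a n)‖` both grow by at most a polynomial factor in each step. -/
theorem height_upper_bound {K : Type*} [Field K] [NumberField K] (ι : K →+* ℂ) (a : ℕ → K) (s : ℕ)
    (hs : 1 ≤ s) (P : ℕ → (𝓞 K)[X]) (hP : P s ≠ 0)
    (hrec : ∀ n : ℕ, ∑ j ∈ Finset.range (s + 1),
        algebraMap (𝓞 K) K ((P j).eval (n : 𝓞 K)) * a (n + j) = 0) :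
    ∃ C₁ : ℝ, 0 < C₁ ∧ ∀ᶠ n : ℕ in atTop, weilHeight K (a n) ≤ C₁ * (n * Real.log n) := by
  obtain ⟨_, hev⟩ := poly_ratio_le_pow 1 _ (recurrence_map a s P hP hrec ι).1
  obtain ⟨n₁, hn₁⟩ := eventually_atTop.1 hev
  have hne : ∀ n ≥ n₁, (P s).eval (n : 𝓞 K) ≠ 0 := by
    intro n hn h0
    apply (hn₁ n hn).1
    rw [Polynomial.eval_natCast_map, h0, map_zero]
  obtain ⟨d, hd0, hd⟩ := exists_common_den a (n₁ + s)
  set e : ℕ → 𝓞 K := fun n => d * ∏ i ∈ Finset.range n, (P s).eval ((n₁ + i : ℕ) : 𝓞 K) with he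
  have he0 : ∀ n, e n ≠ 0 := fun n =>
    mul_ne_zero hd0 (Finset.prod_ne_zero_iff.2 fun i _ => hne _ (by omega))
  have hden := den_recurrence a s P hrec n₁ d hd
  have hσ : ∀ σ : K →+* ℂ, ∃ C : ℝ, 0 < C ∧ ∀ᶠ n : ℕ in atTop,
      Real.log (max 1 ‖σ (algebraMap (𝓞 K) K (e n))‖) + Real.log (max 1 ‖σ (a n)‖) ≤
        C * (n * Real.log n) := by
    intro σ
    obtain ⟨hPσ, hrecσ⟩ := recurrence_map a s P hP hrec σ
    obtain ⟨E₁, hE₁⟩ := poly_ratio_le_pow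
      (((P s).map (σ.comp (algebraMap (𝓞 K) K))).comp
        (Polynomial.X + Polynomial.C (n₁ : ℂ))) 1 one_ne_zero
    obtain ⟨C₁, hC₁, h₁⟩ := log_growth (fun n => ‖σ (algebraMap (𝓞 K) K (e n))‖)
      (fun _ => norm_nonneg _) E₁ (by
        filter_upwards [hE₁] with n hn
        have h2 := hn.2
        simp only [Polynomial.eval_comp, Polynomial.eval_add, Polynomial.eval_X,
          Polynomial.eval_C, Polynomial.eval_one, norm_one, div_one] at h2
        rw [← Nat.cast_add, Polynomial.eval_natCast_map, RingHom.comp_apply, add_comm n n₁] at h2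
        have h3 : e (n + 1) = (P s).eval ((n₁ + n : ℕ) : 𝓞 K) * e n := by
          simp only [he, Finset.prod_range_succ]; ring
        rw [h3, map_mul, map_mul, norm_mul]
        gcongr)
    obtain ⟨E₂, hE₂⟩ := window_growth s _ hPσ (fun n => σ (a n)) hrecσ
    obtain ⟨C₂, hC₂, h₂⟩ := log_growth (fun n => ∑ j ∈ Finset.range s, ‖σ (a (n + j))‖)
      (fun _ => Finset.sum_nonneg fun _ _ => norm_nonneg _) E₂ hE₂
    refine ⟨C₁ + C₂, by positivity, ?_⟩
    filter_upwards [h₁, h₂] with n h1 h2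
    have h3 : ‖σ (a n)‖ ≤ ∑ j ∈ Finset.range s, ‖σ (a (n + j))‖ :=
      Finset.single_le_sum (f := fun j => ‖σ (a (n + j))‖) (fun _ _ => norm_nonneg _)
        (Finset.mem_range.2 (show 0 < s by omega))
    have h4 : Real.log (max 1 ‖σ (a n)‖) ≤
        Real.log (max 1 (∑ j ∈ Finset.range s, ‖σ (a (n + j))‖)) :=
      Real.log_le_log (by positivity) (max_le_max le_rfl h3)
    linarith
  choose C hC hCn using hσ
  refine ⟨∑ σ, C σ, Finset.sum_pos (fun σ _ => hC σ) ⟨ι, Finset.mem_univ _⟩, ?_⟩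
  filter_upwards [Filter.eventually_all.2 hCn] with n hn
  rw [Finset.sum_mul]
  exact (weilHeight_le (a n) (e n) (he0 n) (hden n n (by omega))).trans
    (Finset.sum_le_sum fun σ _ => hn σ)

/-- A solution that is not eventually zero has no long window of zeros far out. -/
lemma exists_ne_zero_in_window {K : Type*} [Field K] (ι : K →+* ℂ) (a : ℕ → K) (s : ℕ)
    (hs : 1 ≤ s) (P : ℕ → ℂ[X]) (hP : P s ≠ 0)
    (hrec : ∀ n : ℕ, ∑ j ∈ Finset.range (s + 1), (P j).eval (n : ℂ) * ι (a (n + j)) = 0)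
    (hnot : ¬ ∀ᶠ n in atTop, a n = 0) :
    ∀ᶠ n : ℕ in atTop, ∃ j < s, a (n + j) ≠ 0 := by
  obtain ⟨E, hE⟩ := window_growth s P hP (fun n => ι (a n)) hrec
  obtain ⟨n₁, hn₁⟩ := eventually_atTop.1 hE
  filter_upwards [eventually_ge_atTop n₁] with n hn
  by_contra! hcon
  apply hnot
  filter_upwards [eventually_ge_atTop n] with m hm
  have h1 := iterate_growth (fun n => ∑ j ∈ Finset.range s, ‖ι (a (n + j))‖)
    (fun _ => Finset.sum_nonneg fun _ _ => norm_nonneg _) E n₁ hn₁ n m hn hm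
  have h2 : ∑ j ∈ Finset.range s, ‖ι (a (n + j))‖ = 0 :=
    Finset.sum_eq_zero fun j hj => by rw [hcon j (by simpa using hj)]; simp
  have h3 : ‖ι (a m)‖ ≤ ∑ j ∈ Finset.range s, ‖ι (a (m + j))‖ :=
    Finset.single_le_sum (f := fun j => ‖ι (a (m + j))‖) (fun _ _ => norm_nonneg _)
      (Finset.mem_range.2 (show 0 < s by omega))
  simp only [h2, mul_zero] at h1
  have h4 : ‖ι (a m)‖ = 0 := le_antisymm (h3.trans h1) (norm_nonneg _)
  simpa using h4

/-- Lower bound for infinite radius. Nonzero terms are as small as `(n!) ^ (-1 / (2 s))`, so the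
Liouville inequality makes their height large; every window of length `s` contains a nonzero
term. -/
theorem lower_bound_top {K : Type*} [Field K] [NumberField K] (ι : K →+* ℂ) (a : ℕ → K) (s : ℕ)
    (hs : 1 ≤ s) (P : ℕ → ℂ[X]) (hP : P s ≠ 0)
    (hrec : ∀ n : ℕ, ∑ j ∈ Finset.range (s + 1), (P j).eval (n : ℂ) * ι (a (n + j)) = 0)
    (hnot : ¬ ∀ᶠ n in atTop, a n = 0)
    (hv : ∀ B : ℝ, ∃ r > B, ∃ C : ℝ, ∀ n, ‖ι (a n)‖ * r ^ n ≤ C) :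
    ∃ c : ℝ, 0 < c ∧ HasPosUpperDensity {n : ℕ | c * (n * Real.log n) ≤ weilHeight K (a n)} := by
  have hs' : (0 : ℝ) < s := by exact_mod_cast hs
  have hd : (0 : ℝ) < Module.finrank ℚ K := by exact_mod_cast Module.finrank_pos
  obtain ⟨C, hC, hCn⟩ := gap_radius_top s hs P hP (fun n => ι (a n)) hrec hv
  refine ⟨1 / (8 * s) / Module.finrank ℚ K, by positivity, ?_⟩
  have hbig : ∀ᶠ n : ℕ in atTop, a n ≠ 0 →
      1 / (8 * s) / Module.finrank ℚ K * (n * Real.log n) ≤ weilHeight K (a n) := by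
    filter_upwards [log_facWeight_ge s hs,
      tendsto_nlogn.eventually_ge_atTop (8 * s * Real.log C)] with n h1 h2 hn
    have h3 := neg_log_norm_le_weilHeight ι (a n) hn
    have hF := facWeight_pos s n
    have h4 : Real.log ‖ι (a n)‖ ≤ Real.log C - Real.log (facWeight s n) := by
      rw [← Real.log_div hC.ne' hF.ne']
      exact Real.log_le_log (by simpa using hn) (hCn n)
    have h5 : Real.log C ≤ 1 / (8 * s) * ((n : ℝ) * Real.log n) := by
      rw [one_div, le_inv_mul_iff₀ (by positivity)]; exact h2
    have h6 : 1 / (4 * s) * ((n : ℝ) * Real.log n) = 2 * (1 / (8 * s) * ((n : ℝ) * Real.log n)) := by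
      field_simp; ring
    rw [div_mul_eq_mul_div, div_le_iff₀ hd]
    linarith
  obtain ⟨M, hM⟩ := eventually_atTop.1
    (hbig.and (exists_ne_zero_in_window ι a s hs P hP hrec hnot))
  refine posUpperDensity_of_windows _ s hs (1 / 2) (by norm_num) (by norm_num)
    (Eventually.frequently ?_)
  filter_upwards [eventually_ge_atTop (2 * M)] with N hN n hn _
  have hMn : M ≤ n := by
    have h1 : ((2 * M : ℕ) : ℝ) ≤ N := by exact_mod_cast hN
    push_cast at h1
    have : (M : ℝ) ≤ n := by linarith
    exact_mod_cast this
  obtain ⟨j, hj, hne⟩ := (hM n hMn).2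
  exact ⟨j, hj, (hM (n + j) (by omega)).1 hne⟩

/-- Lower bound for radius zero. By the gap, `(N!) ^ (1 / (2 s)) < ‖ι (a N)‖` for infinitely many `N`.
Since windows grow by at most a factor `N ^ E` in each step, every window in `[(1 - δ) N, N]`
already contains a term whose logarithm is of order `N log N`. -/
theorem lower_bound_zero {K : Type*} [Field K] [NumberField K] (ι : K →+* ℂ) (a : ℕ → K) (s : ℕ)
    (hs : 1 ≤ s) (P : ℕ → ℂ[X]) (hP : P s ≠ 0)
    (hrec : ∀ n : ℕ, ∑ j ∈ Finset.range (s + 1), (P j).eval (n : ℂ) * ι (a (n + j)) = 0)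
    (hv : ∀ r : ℝ, 0 < r → ¬ ∃ C : ℝ, ∀ n, ‖ι (a n)‖ * r ^ n ≤ C) :
    ∃ c : ℝ, 0 < c ∧ HasPosUpperDensity {n : ℕ | c * (n * Real.log n) ≤ weilHeight K (a n)} := by
  have hs' : (0 : ℝ) < s := by exact_mod_cast hs
  have hd : (0 : ℝ) < Module.finrank ℚ K := by exact_mod_cast Module.finrank_pos
  have hfreq : ∃ᶠ N : ℕ in atTop, facWeight s N < ‖ι (a N)‖ := by
    intro hcon
    obtain ⟨B, C, hB, hC⟩ := gap_radius_zero s hs P hP (fun n => ι (a n)) hrec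
      (hcon.mono fun n hn => not_lt.1 hn)
    refine hv B⁻¹ (inv_pos.2 hB) ⟨C, fun n => ?_⟩
    rw [inv_pow, ← div_eq_mul_inv, div_le_iff₀ (by positivity)]
    exact hC n
  obtain ⟨E, hE⟩ := window_growth s P hP (fun n => ι (a n)) hrec
  obtain ⟨n₁, hn₁⟩ := eventually_atTop.1 hE
  set V : ℕ → ℝ := fun n => ∑ j ∈ Finset.range s, ‖ι (a (n + j))‖ with hVdef
  have hV : ∀ n, 0 ≤ V n := fun _ => Finset.sum_nonneg fun _ _ => norm_nonneg _
  -- With this `δ`, going back `δ N` steps costs at most half of the size of `log |a_N|`.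
  set δ : ℝ := 1 / (8 * s * (E + 1)) with hδ
  have hδ0 : 0 < δ := by positivity
  have hs1 : (1 : ℝ) ≤ s := by exact_mod_cast hs
  have hδ1 : δ ≤ 1 / 8 := by
    rw [hδ]
    apply one_div_le_one_div_of_le (by norm_num)
    have : (0 : ℝ) ≤ E := by positivity
    nlinarith
  have hEδ : E * δ ≤ 1 / (8 * s) := by
    rw [hδ, mul_one_div, div_le_div_iff₀ (by positivity) (by positivity)]
    nlinarith
  refine ⟨1 / (16 * s) / Module.finrank ℚ K, by positivity, ?_⟩
  refine posUpperDensity_of_windows _ s hs δ hδ0 (by linarith) ?_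
  have hev := (log_facWeight_ge s hs).and
    ((tendsto_nlogn.eventually_ge_atTop (16 * s * Real.log s)).and
      (eventually_ge_atTop (2 * n₁ + 1)))
  refine (hfreq.and_eventually hev).mono ?_
  rintro N ⟨hN, h1, h2, hNn₁⟩ n hn hnN
  have hN1 : (1 : ℝ) ≤ N := by exact_mod_cast (by omega : 1 ≤ N)
  have hlogN : 0 ≤ Real.log N := Real.log_nonneg hN1
  have hnn₁ : n₁ ≤ n := by
    have h3 : ((2 * n₁ + 1 : ℕ) : ℝ) ≤ N := by exact_mod_cast hNn₁
    push_cast at h3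
    have : (n₁ : ℝ) ≤ n := by nlinarith
    exact_mod_cast this
  have h3 := iterate_growth V hV E n₁ hn₁ n N hnn₁ (by omega)
  have hF := facWeight_pos s N
  have h4 : facWeight s N < V N := hN.trans_le
    (Finset.single_le_sum (f := fun j => ‖ι (a (N + j))‖) (fun _ _ => norm_nonneg _)
      (Finset.mem_range.2 (show 0 < s by omega)))
  have hVn : 0 < V n := by
    refine lt_of_le_of_ne (hV n) fun h0 => ?_
    rw [← h0, mul_zero] at h3
    linarith
  have h5 : Real.log (facWeight s N) ≤ E * (N - n) * Real.log N + Real.log (V n) := by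
    have h6 := Real.log_le_log hF (h4.le.trans h3)
    rw [Real.log_mul (by positivity) hVn.ne', Real.log_pow] at h6
    rw [Nat.cast_mul, Nat.cast_sub (by omega)] at h6
    exact h6
  have h7 : E * (N - n) * Real.log N ≤ 1 / (8 * s) * (N * Real.log N) := by
    have h8 : (N - n : ℝ) ≤ δ * N := by linarith
    calc E * (N - n) * Real.log N ≤ E * (δ * N) * Real.log N := by gcongr
      _ = (E * δ) * (N * Real.log N) := by ring
      _ ≤ _ := by gcongr
  have h9 : 1 / (4 * s) * ((N : ℝ) * Real.log N) = 2 * (1 / (8 * s) * ((N : ℝ) * Real.log N)) := by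
    field_simp; ring
  -- Some term of the window is at least the average.
  obtain ⟨j, hj, hjV⟩ : ∃ j ∈ Finset.range s, V n / s ≤ ‖ι (a (n + j))‖ := by
    apply Finset.exists_le_of_sum_le (Finset.nonempty_range_iff.2 (by omega))
    rw [Finset.sum_const, Finset.card_range, nsmul_eq_mul, mul_div_cancel₀ _ hs'.ne']
  have hjs : j < s := by simpa using hj
  refine ⟨j, hjs, ?_⟩
  have hpos : 0 < V n / s := by positivity
  have hne : a (n + j) ≠ 0 := by
    intro h0
    rw [h0, map_zero, norm_zero] at hjV
    linarith
  have h10 := Real.log_le_log hpos hjV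
  rw [Real.log_div hVn.ne' hs'.ne'] at h10
  have h11 := log_norm_le_weilHeight ι (a (n + j)) hne
  have h12 : Real.log s ≤ 1 / (16 * s) * ((N : ℝ) * Real.log N) := by
    rw [one_div, le_inv_mul_iff₀ (by positivity)]; exact h2
  have h13 : 1 / (8 * s) * ((N : ℝ) * Real.log N) =
      2 * (1 / (16 * s) * ((N : ℝ) * Real.log N)) := by
    field_simp; ring
  have h14 : ((n + j : ℕ) : ℝ) * Real.log ((n + j : ℕ) : ℝ) ≤ N * Real.log N := by
    have h15 : ((n + j : ℕ) : ℝ) ≤ N := by exact_mod_cast (by omega : n + j ≤ N)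
    rcases Nat.eq_zero_or_pos (n + j) with h0 | h0
    · rw [h0]; simp; positivity
    · have h16 : (0 : ℝ) < ((n + j : ℕ) : ℝ) := by exact_mod_cast h0
      have := Real.log_le_log h16 h15
      gcongr
  have h17 : 1 / (16 * s) * (((n + j : ℕ) : ℝ) * Real.log ((n + j : ℕ) : ℝ)) ≤
      1 / (16 * s) * ((N : ℝ) * Real.log N) := by gcongr
  rw [Set.mem_ofPred_eq, div_mul_eq_mul_div, div_le_iff₀ hd]
  linarith

lemma seriesRadius_eq_zero (u : ℕ → ℂ) (h : seriesRadius u = 0) (r : ℝ) (hr : 0 < r) :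
    ¬ ∃ C : ℝ, ∀ n, ‖u n‖ * r ^ n ≤ C := by
  intro hC
  lift r to NNReal using hr.le
  have h1 : (r : ENNReal) ≤ seriesRadius u :=
    le_iSup₂ (f := fun (r : NNReal) (_ : ∃ C : ℝ, ∀ n, ‖u n‖ * (r : ℝ) ^ n ≤ C) =>
      (r : ENNReal)) r hC
  rw [h, nonpos_iff_eq_zero, ENNReal.coe_eq_zero] at h1
  simp [h1] at hr

lemma seriesRadius_eq_top (u : ℕ → ℂ) (h : seriesRadius u = ⊤) (B : ℝ) :
    ∃ r > B, ∃ C : ℝ, ∀ n, ‖u n‖ * r ^ n ≤ C := by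
  have h1 : (B.toNNReal : ENNReal) < seriesRadius u := by rw [h]; exact ENNReal.coe_lt_top
  obtain ⟨r, hr⟩ := lt_iSup_iff.1 h1
  obtain ⟨hC, hlt⟩ := lt_iSup_iff.1 hr
  exact ⟨r, (Real.le_coe_toNNReal B).trans_lt (NNReal.coe_lt_coe.2 (ENNReal.coe_lt_coe.1 hlt)), hC⟩

/-- If `f = ∑ aₙ zⁿ ∈ K[[z]]` is a D-finite power series over a number
field `K` that is not a polynomial, and the radius of convergence of the associated
complex series is `0` or `∞`, then `h(aₙ) ≤ C₁ n log n` for all large `n`, and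
`h(aₙ) ≥ c n log n` on a set of positive upper density. -/
theorem dfinite_height_growth_extreme_radius
    (K : Type*) [Field K] [NumberField K] (ι : K →+* ℂ) (a : ℕ → K)
    (hDF : IsDFinite (PowerSeries.mk a))
    (hnotpoly : ¬ ∃ P : Polynomial K, PowerSeries.mk a = (P : PowerSeries K))
    (hr : seriesRadius (fun n => ι (a n)) = 0 ∨ seriesRadius (fun n => ι (a n)) = ⊤) :
    (∃ C₁ : ℝ, 0 < C₁ ∧ ∀ᶠ n : ℕ in Filter.atTop,
        weilHeight K (a n) ≤ C₁ * (n * Real.log n)) ∧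
    (∃ c : ℝ, 0 < c ∧
        HasPosUpperDensity {n : ℕ | c * (n * Real.log n) ≤ weilHeight K (a n)}) := by
  obtain ⟨s, P, hP, hrec⟩ := exists_integral_recurrence a hDF
  have hnot : ¬ ∀ᶠ n in atTop, a n = 0 := fun h =>
    hnotpoly (exists_polynomial_of_eventually_zero a h)
  obtain ⟨hPι, hrecι⟩ := recurrence_map a s P hP hrec ι
  have hs : 1 ≤ s := by
    by_contra! h0
    obtain rfl : s = 0 := by omega
    apply hnot
    -- A recurrence of order zero reads `P₀(n) aₙ = 0`.
    obtain ⟨_, hE⟩ := poly_ratio_le_pow 1 _ hPι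
    filter_upwards [hE] with n hn
    have h1 := hrecι n
    simp only [zero_add, Finset.sum_range_one, add_zero] at h1
    simpa using (mul_eq_zero.1 h1).resolve_left hn.1
  refine ⟨height_upper_bound ι a s hs P hP hrec, ?_⟩
  rcases hr with hr | hr
  · exact lower_bound_zero ι a s hs _ hPι hrecι (seriesRadius_eq_zero _ hr)
  · exact lower_bound_top ι a s hs _ hPι hrecι hnot (seriesRadius_eq_top _ hr)
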